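/- Let 1 < q < ∞, r ≥ 1 with |1/q − 1/2| < 1/r, and ε > 0. Suppose Υ is a finite collection of pairwise disjoint subintervals of ℝ⁺ and, for each υ ∈ Υ, m_υ is a function supported on υ with ‖m_υ‖_{V^r} < ∞. Then ‖ Σ_{υ∈Υ} m_υ ‖_{M^q} ≤ C_{q,r,ε} |Υ|^{|1/q − 1/2| + ε} · sup_{υ∈Υ} ‖m_υ‖_{V^r}. -/

import Mathlib

open MeasureTheory Set Filter
open scoped ENNReal NNReal Classical BigOperators RealInnerProductSpace

noncomputable section

/-- The binary digit of `x` in position `n+1` to the left of the point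
(terminating expansion for dyadic rationals). -/
def digit (n : ℤ) (x : ℝ) : ℤ := ⌊x / 2 ^ n⌋ % 2

/-- Bitwise addition `⊕` on nonnegative reals. -/
def wXor (x y : ℝ) : ℝ := ∑' n : ℤ, (((digit n x + digit n y) % 2 : ℤ) : ℝ) * 2 ^ n

/-- The `n`-th digit of the bitwise product `x ⊗ y`. -/
def wMulDigit (n : ℤ) (x y : ℝ) : ℤ :=
  ⌊∑' m : ℤ, ((digit (n - m) x * digit m y : ℤ) : ℝ)⌋ % 2

/-- Bitwise multiplication `⊗` on nonnegative reals. -/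
def wMul (x y : ℝ) : ℝ := ∑' n : ℤ, ((wMulDigit n x y : ℤ) : ℝ) * 2 ^ n

/-- The Walsh character `e(x) = exp (i π d₋₁(x))`. -/
def walshe (x : ℝ) : ℝ := (-1 : ℝ) ^ (digit (-1) x)

/-- The Walsh–Fourier transform on `ℝ⁺`; it is involutive, so it also serves
as the inverse Walsh–Fourier transform `ˇ`. -/
def walshFT (f : ℝ → ℝ) (ξ : ℝ) : ℝ := ∫ x in Set.Ici (0 : ℝ), walshe (wMul ξ x) * f x

/-- Lebesgue measure on `ℝ⁺`. -/
def μplus : Measure ℝ := volume.restrict (Set.Ici 0)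

/-- `L^p` norm (real exponent `p`) of an `ℝ≥0∞`-valued function. -/
def lpNormE (p : ℝ) (μ : Measure ℝ) (F : ℝ → ℝ≥0∞) : ℝ≥0∞ := (∫⁻ x, F x ^ p ∂μ) ^ (1 / p)

/-- The `r`-variation norm of `m` on the domain `D`. -/
def vnorm {ι E : Type*} [LinearOrder ι] [NormedAddCommGroup E] (r : ℝ) (D : Set ι)
    (m : ι → E) : ℝ≥0∞ :=
  (⨆ ξ ∈ D, (‖m ξ‖₊ : ℝ≥0∞)) +
    ⨆ (N : ℕ) (u : Fin (N + 1) → ι) (_ : StrictMono u) (_ : ∀ i, u i ∈ D),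
      (∑ i : Fin N, (‖m (u i.succ) - m (u i.castSucc)‖₊ : ℝ≥0∞) ^ r) ^ (1 / r)

/-- The Walsh `L^q`-multiplier norm. -/
def Mq (q : ℝ) (m : ℝ → ℝ) : ℝ≥0∞ :=
  ⨆ (g : ℝ → ℝ) (_ : eLpNorm g (ENNReal.ofReal q) μplus = 1),
    eLpNorm (walshFT fun ξ => m ξ * walshFT g ξ) (ENNReal.ofReal q) μplus

/-- The Walsh `L^q`-maximal-multiplier norm of a sequence of multipliers. -/
def Mqstar (q : ℝ) (m : ℤ → ℝ → ℝ) : ℝ≥0∞ :=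
  ⨆ (g : ℝ → ℝ) (_ : eLpNorm g (ENNReal.ofReal q) μplus = 1),
    lpNormE q μplus fun x => ⨆ k : ℤ, (‖walshFT (fun ξ => m k ξ * walshFT g ξ) x‖₊ : ℝ≥0∞)

/-- The `s`-variation `L^q`-multiplier norm of a sequence of multipliers. -/
def Mqs (q s : ℝ) (m : ℤ → ℝ → ℝ) : ℝ≥0∞ :=
  ⨆ (g : ℝ → ℝ) (_ : eLpNorm g (ENNReal.ofReal q) μplus = 1),
    lpNormE q μplus fun x =>
      vnorm s (Set.univ : Set ℤ) fun k => walshFT (fun ξ => m k ξ * walshFT g ξ) x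

/-- Dyadic intervals `[n 2^k, (n+1) 2^k)`. -/
def IsDyadic (I : Set ℝ) : Prop :=
  ∃ n k : ℤ, I = Set.Ico ((n : ℝ) * 2 ^ k) (((n : ℝ) + 1) * 2 ^ k)

/-- Dyadic intervals of length `2^k`. -/
def IsDyadicLen (k : ℤ) (ω : Set ℝ) : Prop :=
  ∃ n : ℤ, ω = Set.Ico ((n : ℝ) * 2 ^ k) (((n : ℝ) + 1) * 2 ^ k)

/-- The lower half of an interval. -/
def lowerHalf (ω : Set ℝ) : Set ℝ := ω ∩ Set.Iio ((sInf ω + sSup ω) / 2)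

/-- The upper half of an interval. -/
def upperHalf (ω : Set ℝ) : Set ℝ := ω ∩ Set.Ici ((sInf ω + sSup ω) / 2)

/-- A bitile `I × ω ⊆ ℝ⁺ × ℝ⁺` : a rectangle of dyadic intervals of area `2`. -/
structure Bitile where
  I : Set ℝ
  ω : Set ℝ
  hI : IsDyadic I
  hω : IsDyadic ω
  hIsub : I ⊆ Set.Ici 0
  hωsub : ω ⊆ Set.Ici 0
  harea : volume I * volume ω = 2

/-- The `L²`-normalized Walsh wave packet of the tile `I × ω`. -/
def wavePacket (I ω : Set ℝ) (x : ℝ) : ℝ :=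
  Real.sqrt (volume I).toReal * walshFT (Set.indicator ω fun _ => (1 : ℝ)) (wXor x (sInf I))

/-- `⟨f, φ_{P_l}⟩`, the pairing of `f` with the wave packet of the lower tile of `P`. -/
def walshCoef (P : Bitile) (f : ℝ → ℝ) : ℝ :=
  ∫ y in Set.Ici (0 : ℝ), f y * wavePacket P.I (lowerHalf P.ω) y

/-- The partial order on bitiles. -/
def Bitile.le (P Q : Bitile) : Prop := P.I ⊆ Q.I ∧ Q.ω ⊆ P.ω

/-- Convexity of a set of bitiles. -/
def ConvexBitiles (S : Set Bitile) : Prop :=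
  ∀ P₁ P₂ P₃ : Bitile, P₁ ∈ S → P₃ ∈ S → Bitile.le P₁ P₂ → Bitile.le P₂ P₃ → P₂ ∈ S

/-- The truncated partial Walsh-sum operator attached to a collection `Ps` of bitiles. -/
def Sk (Ps : Set Bitile) (f : ℝ → ℝ) (k : ℤ) (ξ x : ℝ) : ℝ :=
  ∑ᶠ (P : Bitile) (_ : P ∈ Ps ∧ volume P.I < 2 ^ k),
    walshCoef P f * wavePacket P.I (lowerHalf P.ω) x *
      Set.indicator (upperHalf P.ω) (fun _ => (1 : ℝ)) ξ

/-- The partial Walsh-sum operator `S[f](ξ,x) = (f̂ 1_{[0,ξ)})ˇ(x)`. -/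
def Spartial (f : ℝ → ℝ) (ξ x : ℝ) : ℝ :=
  walshFT (fun η => Set.indicator (Set.Ico 0 ξ) (fun _ => (1 : ℝ)) η * walshFT f η) x

/-- A tree of bitiles with top data `(ξtop, Itop)`. -/
structure WTree where
  carrier : Set Bitile
  ξtop : ℝ
  Itop : Set ℝ

/-- The defining conditions of a tree. -/
def IsTree (T : WTree) : Prop :=
  IsDyadic T.Itop ∧ 0 ≤ T.ξtop ∧ ∀ P ∈ T.carrier, P.I ⊆ T.Itop ∧ T.ξtop ∈ P.ω

/-- `u`-overlapping trees. -/
def UOverlapping (T : WTree) : Prop := ∀ P ∈ T.carrier, T.ξtop ∈ upperHalf P.ω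

/-- `l`-overlapping trees. -/
def LOverlapping (T : WTree) : Prop := ∀ P ∈ T.carrier, T.ξtop ∈ lowerHalf P.ω

/-- `T` is td-maximal among the trees in `Cc` : maximal with respect to inclusion among
trees in `Cc` with the same top data. -/
def TdMaximalAmong (T : WTree) (Cc : Set WTree) : Prop :=
  T ∈ Cc ∧ ∀ T' ∈ Cc, T'.ξtop = T.ξtop → T'.Itop = T.Itop →
    T.carrier ⊆ T'.carrier → T'.carrier ⊆ T.carrier

/-- Order on the lower tiles of two bitiles. -/
def lowerLE (P Q : Bitile) : Prop := P.I ⊆ Q.I ∧ lowerHalf Q.ω ⊆ lowerHalf P.ω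

/-- Strict order on the lower tiles of two bitiles. -/
def lowerLT (P Q : Bitile) : Prop := lowerLE P Q ∧ ¬ lowerLE Q P

/-- `l`-convexity of a set of bitiles. -/
def LConvex (S : Set Bitile) : Prop :=
  ∀ P P' P'' : Bitile, P ∈ S → P'' ∈ S → lowerLT P P' → lowerLT P' P'' → P' ∈ S

/-- A properly-sorted collection of `l`-overlapping trees. -/
def ProperlySorted (Ts : Set WTree) : Prop :=
  (∀ T ∈ Ts, IsTree T ∧ LOverlapping T ∧ LConvex T.carrier) ∧
  (∀ T ∈ Ts, ∀ T' ∈ Ts, T ≠ T' → T.carrier ∩ T'.carrier = ∅) ∧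
  (∀ T ∈ Ts, ∀ P ∈ T.carrier, ∀ T' ∈ Ts, (T'.Itop ∩ P.I).Nonempty → T'.ξtop ∉ upperHalf P.ω)

/-- The multiplier `𝒟_k = Σ_{|ω| = 2^k, ω ∩ Ξ ≠ ∅} a_ω 1_ω`. -/
def Dk (a : Set ℝ → ℝ) (Ξ : Set ℝ) (k : ℤ) (ξ : ℝ) : ℝ :=
  ∑ᶠ (ω : Set ℝ) (_ : IsDyadicLen k ω ∧ (ω ∩ Ξ).Nonempty),
    a ω * Set.indicator ω (fun _ => (1 : ℝ)) ξ

/-- The sequence `k ↦ Σ_{|ω| = 2^k} a_ω 1_ω(ξ)`. -/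
def dyadicSum (a : Set ℝ → ℝ) (ξ : ℝ) (k : ℤ) : ℝ :=
  ∑ᶠ (ω : Set ℝ) (_ : IsDyadicLen k ω), a ω * Set.indicator ω (fun _ => (1 : ℝ)) ξ

/-- A tile `I × ω ⊆ ℝ⁺ × ℝ⁺` : a rectangle of dyadic intervals of area `1`. -/
structure WTile where
  I : Set ℝ
  ω : Set ℝ
  hI : IsDyadic I
  hω : IsDyadic ω
  hIsub : I ⊆ Set.Ici 0
  hωsub : ω ⊆ Set.Ici 0
  harea : volume I * volume ω = 1

/-- The subset of the phase plane occupied by a tile. -/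
def WTile.carrier (p : WTile) : Set (ℝ × ℝ) := p.I ×ˢ p.ω

/-- The phase-plane projection `Π_S` associated to a region `S` which can be written as a
finite disjoint union of tiles (it is independent of the chosen tiling). -/
def phaseProj (S : Set (ℝ × ℝ)) (f : ℝ → ℝ) : ℝ → ℝ :=
  if h : ∃ ps : Set WTile, ps.Finite ∧ ps.PairwiseDisjoint WTile.carrier ∧
      (⋃ p ∈ ps, p.carrier) = S then
    fun x => ∑ᶠ p ∈ h.choose,
      (∫ y in Set.Ici (0 : ℝ), f y * wavePacket p.I p.ω y) * wavePacket p.I p.ω x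
  else 0

/-- The region of the phase plane occupied by a tree. -/
def treeRegion (T : WTree) : Set (ℝ × ℝ) := ⋃ P ∈ T.carrier, P.I ×ˢ P.ω

/-- `size(Ps, f) = sup_{T ⊆ Ps convex tree} |I_T|^{-1/2} ‖Π_T f‖_{L²}`. -/
def size (Ps : Set Bitile) (f : ℝ → ℝ) : ℝ≥0∞ :=
  ⨆ (T : WTree) (_ : IsTree T ∧ ConvexBitiles T.carrier ∧ T.carrier ⊆ Ps),
    (volume T.Itop ^ (1 / 2 : ℝ))⁻¹ * eLpNorm (phaseProj (treeRegion T) f) 2 μplus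

/-! ### Part A: finite Walsh functions -/

/-- Finite Walsh matrix. -/
def WW (L a b : ℕ) : ℝ :=
  ∏ t ∈ Finset.range L, if (a.testBit t && b.testBit (L - 1 - t)) = true then (-1 : ℝ) else 1

lemma WW_symm (L a b : ℕ) : WW L a b = WW L b a := by
  unfold WW
  rw [← Finset.prod_range_reflect]
  refine Finset.prod_congr rfl fun t ht => ?_
  have := Finset.mem_range.1 ht
  have h : L - 1 - (L - 1 - t) = t := by omega
  rw [h, Bool.and_comm]

lemma WW_abs (L a b : ℕ) : |WW L a b| = 1 := by
  unfold WW
  rw [Finset.abs_prod]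
  refine Finset.prod_eq_one fun t _ => ?_
  split_ifs <;> simp

lemma WW_factor (i k c a d b : ℕ) (ha : a < 2 ^ i) (hb : b < 2 ^ k) :
    WW (i + k) (2 ^ i * c + a) (2 ^ k * d + b) = WW i a d * WW k c b := by
  unfold WW
  rw [Finset.prod_range_add]
  congr 1
  · refine Finset.prod_congr rfl fun t ht => ?_
    have := Finset.mem_range.1 ht
    rw [Nat.testBit_two_pow_mul_add _ ha, Nat.testBit_two_pow_mul_add _ hb, if_pos this,
      if_neg (show ¬ i + k - 1 - t < k by omega), show i + k - 1 - t - k = i - 1 - t by omega]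
  · refine Finset.prod_congr rfl fun t ht => ?_
    have := Finset.mem_range.1 ht
    rw [Nat.testBit_two_pow_mul_add _ ha, Nat.testBit_two_pow_mul_add _ hb, 
      if_neg (show ¬ i + t < i by omega), if_pos (show i + k - 1 - (i + t) < k by omega), show i + k - 1 - (i + t) = k - 1 - t by omega,
      show i + t - i = t by omega]

lemma sum_blocks (n m : ℕ) (F : ℕ → ℝ) :
    ∑ x ∈ Finset.range (m * n), F x
      = ∑ c ∈ Finset.range n, ∑ a ∈ Finset.range m, F (m * c + a) := by
  induction n with
  | zero => simp
  | succ n ih => rw [Finset.sum_range_succ, ← ih, Nat.mul_succ, Finset.sum_range_add]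

lemma sum_blocks2 (i k : ℕ) (F : ℕ → ℝ) :
    ∑ x ∈ Finset.range (2 ^ (i + k)), F x
      = ∑ c ∈ Finset.range (2 ^ k), ∑ a ∈ Finset.range (2 ^ i), F (2 ^ i * c + a) := by
  rw [pow_add, sum_blocks]

lemma WW_orth (L : ℕ) : ∀ a a' : ℕ, a < 2 ^ L → a' < 2 ^ L →
    ∑ b ∈ Finset.range (2 ^ L), WW L a b * WW L a' b = if a = a' then (2 : ℝ) ^ L else 0 := by
  induction L with
  | zero => intro a a' h h'; simp at h h'; subst h; subst h'; simp [WW]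
  | succ L ih =>
    intro a a' h h'
    have e : ∀ a b : ℕ, ∀ d, b < 2 ^ L →
        WW (L + 1) a (2 ^ L * d + b) = WW 1 (a % 2) d * WW L (a / 2) b := by
      intro a b d hb
      have := WW_factor 1 L (a / 2) (a % 2) d b (by omega) hb
      rw [← this, add_comm 1 L]
      congr 1
      omega
    rw [show 2 ^ (L + 1) = 2 ^ L * 2 from pow_succ _ _, sum_blocks]
    have : ∀ d ∈ Finset.range 2, ∑ b ∈ Finset.range (2 ^ L),
        WW (L + 1) a (2 ^ L * d + b) * WW (L + 1) a' (2 ^ L * d + b)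
        = WW 1 (a % 2) d * WW 1 (a' % 2) d * if a / 2 = a' / 2 then (2 : ℝ) ^ L else 0 := by
      intro d _
      rw [← ih (a / 2) (a' / 2) (by rw [pow_succ] at h; omega) (by rw [pow_succ] at h'; omega),
        Finset.mul_sum]
      refine Finset.sum_congr rfl fun b hb => ?_
      rw [e a b d (Finset.mem_range.1 hb), e a' b d (Finset.mem_range.1 hb)]
      ring
    rw [Finset.sum_congr rfl this, ← Finset.sum_mul]
    have key : ∑ i ∈ Finset.range 2, WW 1 (a % 2) i * WW 1 (a' % 2) i
        = if a % 2 = a' % 2 then 2 else 0 := by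
      rcases Nat.mod_two_eq_zero_or_one a with h1 | h1 <;>
      rcases Nat.mod_two_eq_zero_or_one a' with h2 | h2 <;>
      rw [h1, h2] <;> norm_num [WW, Finset.sum_range_succ]
    rw [key]
    by_cases h3 : a = a'
    · subst h3; simp [pow_succ]; ring
    · rw [if_neg h3]
      by_cases h4 : a % 2 = a' % 2
      · rw [if_neg (show ¬ a / 2 = a' / 2 by omega)]; simp
      · rw [if_neg h4]; simp

/-- finite Walsh transform -/
def ft (L : ℕ) (f : ℕ → ℝ) (b : ℕ) : ℝ := ∑ a ∈ Finset.range (2 ^ L), WW L a b * f a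

/-- Inverse transform of a sequence (unnormalised), Parseval. -/
lemma ft_parseval (L : ℕ) (f : ℕ → ℝ) :
    ∑ b ∈ Finset.range (2 ^ L), ft L f b ^ 2 = 2 ^ L * ∑ a ∈ Finset.range (2 ^ L), f a ^ 2 := by
  have h1 : ∀ b, ft L f b ^ 2 = ∑ a ∈ Finset.range (2 ^ L), ∑ a' ∈ Finset.range (2 ^ L),
      f a * f a' * (WW L a b * WW L a' b) := by
    intro b
    rw [sq, ft, Finset.sum_mul_sum]
    refine Finset.sum_congr rfl fun a _ => Finset.sum_congr rfl fun a' _ => by ring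
  rw [Finset.sum_congr rfl fun b _ => h1 b, Finset.sum_comm, Finset.mul_sum]
  refine Finset.sum_congr rfl fun a ha => ?_
  rw [Finset.sum_comm]
  have h2 : ∀ a' ∈ Finset.range (2 ^ L), ∑ b ∈ Finset.range (2 ^ L),
      f a * f a' * (WW L a b * WW L a' b) = if a = a' then 2 ^ L * f a ^ 2 else 0 := by
    intro a' ha'
    rw [← Finset.mul_sum, WW_orth L a a' (Finset.mem_range.1 ha) (Finset.mem_range.1 ha')]
    split_ifs with h
    · subst h; ring
    · simp
  rw [Finset.sum_congr rfl h2]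
  simp [Finset.mem_range.1 ha]

/-- finite Walsh multiplier operator -/
def TT (L : ℕ) (μ f : ℕ → ℝ) (x : ℕ) : ℝ :=
  (2 ^ L : ℝ)⁻¹ * ft L (fun b => μ b * ft L f b) x

lemma ft_add (L : ℕ) (f g : ℕ → ℝ) (b : ℕ) :
    ft L (fun a => f a + g a) b = ft L f b + ft L g b := by
  simp [ft, mul_add, Finset.sum_add_distrib]

lemma TT_add (L : ℕ) (μ f g : ℕ → ℝ) (x : ℕ) :
    TT L μ (fun a => f a + g a) x = TT L μ f x + TT L μ g x := by
  simp only [TT, ft_add, mul_add]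

lemma TT_L2 (L : ℕ) (μ f : ℕ → ℝ) (hμ : ∀ b < 2 ^ L, |μ b| ≤ 1) :
    ∑ x ∈ Finset.range (2 ^ L), TT L μ f x ^ 2 ≤ ∑ a ∈ Finset.range (2 ^ L), f a ^ 2 := by
  simp only [TT, mul_pow]
  rw [← Finset.mul_sum, ft_parseval]
  have h : ∑ a ∈ Finset.range (2 ^ L), (μ a * ft L f a) ^ 2
      ≤ 2 ^ L * ∑ a ∈ Finset.range (2 ^ L), f a ^ 2 := by
    rw [← ft_parseval]
    refine Finset.sum_le_sum fun a ha => ?_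
    have h1 := hμ a (Finset.mem_range.1 ha)
    have h2 : μ a ^ 2 ≤ 1 := by rw [← sq_abs]; nlinarith [abs_nonneg (μ a)]
    rw [mul_pow]
    nlinarith [sq_nonneg (ft L f a)]
  have hp : (0 : ℝ) < 2 ^ L := by positivity
  calc _ ≤ ((2 ^ L : ℝ)⁻¹) ^ 2 * (2 ^ L * (2 ^ L * ∑ a ∈ Finset.range (2 ^ L), f a ^ 2)) := by
        gcongr
    _ = _ := by field_simp

/-- piecewise constancy with break points `Ξ` -/
def PC (L : ℕ) (μ : ℕ → ℝ) (Ξ : Finset ℕ) : Prop :=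
  ∀ x y, x ≤ y → y < 2 ^ L → (∀ z ∈ Ξ, ¬ (x ≤ z ∧ z ≤ y)) → μ x = μ y

lemma ft_block (i k c : ℕ) (hc : c < 2 ^ k) (f : ℕ → ℝ) (hf : ∀ a, a / 2 ^ i ≠ c → f a = 0)
    (d b : ℕ) (hb : b < 2 ^ k) :
    ft (i + k) f (2 ^ k * d + b) = WW k c b * ft i (fun a => f (2 ^ i * c + a)) d := by
  rw [ft, sum_blocks2, Finset.sum_eq_single c]
  · rw [ft, Finset.mul_sum]
    refine Finset.sum_congr rfl fun a ha => ?_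
    rw [WW_factor _ _ _ _ _ _ (Finset.mem_range.1 ha) hb]; ring
  · intro c' _ hne
    refine Finset.sum_eq_zero fun a ha => ?_
    rw [hf, mul_zero]
    rw [Nat.mul_add_div (by positivity), Nat.div_eq_of_lt (Finset.mem_range.1 ha)]
    simpa using hne
  · intro h; exact absurd (Finset.mem_range.2 hc) h

lemma ft_inv (L : ℕ) (F : ℕ → ℝ) (d : ℕ) (hd : d < 2 ^ L) :
    ft L (fun a => (2 ^ L : ℝ)⁻¹ * ft L F a) d = F d := by
  have : ∀ a ∈ Finset.range (2 ^ L), WW L a d * ((2 ^ L : ℝ)⁻¹ * ft L F a)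
     = ∑ b ∈ Finset.range (2 ^ L), (2 ^ L : ℝ)⁻¹ * F b * (WW L d a * WW L b a) := by
    intro a _
    rw [ft, Finset.mul_sum, Finset.mul_sum]
    refine Finset.sum_congr rfl fun b _ => ?_
    rw [WW_symm L a d]; ring
  rw [ft, Finset.sum_congr rfl this, Finset.sum_comm]
  have : ∀ b ∈ Finset.range (2 ^ L), ∑ a ∈ Finset.range (2 ^ L),
      (2 ^ L : ℝ)⁻¹ * F b * (WW L d a * WW L b a) = if d = b then F b else 0 := by
    intro b hb
    rw [← Finset.mul_sum, WW_orth L d b hd (Finset.mem_range.1 hb)]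
    split_ifs
    · field_simp
    · simp
  rw [Finset.sum_congr rfl this]
  simp [hd]

lemma key_block (i k c M : ℕ) (hc : c < 2 ^ k) (μ : ℕ → ℝ) (Ξ : Finset ℕ) (hΞ : Ξ.card ≤ M)
    (hμ : PC (i + k) μ Ξ) (f : ℕ → ℝ) (hf : ∀ a, a / 2 ^ i ≠ c → f a = 0) :
    ∃ g : ℕ → ℝ, (∀ a, a / 2 ^ i ≠ c → g a = 0) ∧
      ∑ a ∈ Finset.range (2 ^ (i + k)), g a ^ 2
        ≤ M / 2 ^ i * (∑ a ∈ Finset.range (2 ^ (i + k)), |f a|) ^ 2 ∧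
      ∀ x < 2 ^ (i + k), x / 2 ^ i ≠ c → TT (i + k) μ f x = TT (i + k) μ g x := by
  set D : Finset ℕ := Ξ.image (fun z => z / 2 ^ k) with hD
  set Φ : ℕ → ℝ := ft i (fun a => f (2 ^ i * c + a)) with hΦ
  set Ψ : ℕ → ℝ := fun d => if d ∈ D then Φ d else 0 with hΨ
  set γ : ℕ → ℝ := fun a => (2 ^ i : ℝ)⁻¹ * ft i Ψ a with hγ
  set g : ℕ → ℝ := fun a => if a / 2 ^ i = c then γ (a % 2 ^ i) else 0 with hg
  have hgs : ∀ a, a / 2 ^ i ≠ c → g a = 0 := fun a h => by simp [hg, h]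
  have hgc : ∀ a < 2 ^ i, g (2 ^ i * c + a) = γ a := by
    intro a ha
    have h1 : (2 ^ i * c + a) / 2 ^ i = c := by
      rw [Nat.mul_add_div (by positivity), Nat.div_eq_of_lt ha, add_zero]
    have h2 : (2 ^ i * c + a) % 2 ^ i = a := by
      rw [Nat.mul_add_mod, Nat.mod_eq_of_lt ha]
    simp [hg, h1, h2]
  have hfs : ∑ a ∈ Finset.range (2 ^ (i + k)), |f a|
      = ∑ a ∈ Finset.range (2 ^ i), |f (2 ^ i * c + a)| := by
    rw [sum_blocks2, Finset.sum_eq_single c]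
    · intro c' _ hne
      refine Finset.sum_eq_zero fun a ha => ?_
      rw [hf, abs_zero]
      rw [Nat.mul_add_div (by positivity), Nat.div_eq_of_lt (Finset.mem_range.1 ha)]
      simpa using hne
    · intro h; exact absurd (Finset.mem_range.2 hc) h
  have hgsum : ∑ a ∈ Finset.range (2 ^ (i + k)), g a ^ 2
      = ∑ a ∈ Finset.range (2 ^ i), γ a ^ 2 := by
    rw [sum_blocks2, Finset.sum_eq_single c]
    · exact Finset.sum_congr rfl fun a ha => by rw [hgc a (Finset.mem_range.1 ha)]
    · intro c' _ hne
      refine Finset.sum_eq_zero fun a ha => ?_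
      rw [hgs, sq, mul_zero]
      rw [Nat.mul_add_div (by positivity), Nat.div_eq_of_lt (Finset.mem_range.1 ha)]
      simpa using hne
    · intro h; exact absurd (Finset.mem_range.2 hc) h
  have hp : (0 : ℝ) < 2 ^ i := by positivity
  refine ⟨g, hgs, ?_, ?_⟩
  · rw [hgsum, hfs]
    simp only [hγ, mul_pow]
    rw [← Finset.mul_sum, ft_parseval]
    have hΦb : ∀ d, Φ d ^ 2 ≤ (∑ a ∈ Finset.range (2 ^ i), |f (2 ^ i * c + a)|) ^ 2 := by
      intro d
      rw [← sq_abs]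
      gcongr
      rw [hΦ, ft]
      refine (Finset.abs_sum_le_sum_abs _ _).trans (Finset.sum_le_sum fun a _ => ?_)
      rw [abs_mul, WW_abs, one_mul]
    have h1 : ∑ a ∈ Finset.range (2 ^ i), Ψ a ^ 2
        ≤ M * (∑ a ∈ Finset.range (2 ^ i), |f (2 ^ i * c + a)|) ^ 2 := by
      have : ∀ a ∈ Finset.range (2 ^ i), Ψ a ^ 2 = if a ∈ D then Φ a ^ 2 else 0 := by
        intro a _; simp only [hΨ]; split_ifs <;> simp
      rw [Finset.sum_congr rfl this, ← Finset.sum_filter]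
      refine (Finset.sum_le_card_nsmul _ _ _ fun a _ => hΦb a).trans ?_
      rw [nsmul_eq_mul]
      gcongr
      refine le_trans (Finset.card_le_card (t := D) ?_) (Finset.card_image_le.trans hΞ)
      intro a ha
      exact (Finset.mem_filter.1 ha).2
    calc _ ≤ ((2 ^ i : ℝ)⁻¹) ^ 2 * (2 ^ i * (M * (∑ a ∈ Finset.range (2 ^ i), |f (2 ^ i * c + a)|) ^ 2)) := by
          gcongr
      _ = _ := by field_simp
  · intro x hx hxc
    simp only [TT]
    congr 1
    have hxd : x = 2 ^ i * (x / 2 ^ i) + x % 2 ^ i := (Nat.div_add_mod _ _).symm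
    have hxm : x % 2 ^ i < 2 ^ i := Nat.mod_lt _ (by positivity)
    have hxe : x / 2 ^ i < 2 ^ k := by
      rw [Nat.div_lt_iff_lt_mul (by positivity), ← pow_add, add_comm k i]; exact hx
    have hgft : ∀ d < 2 ^ i, ft i (fun a => g (2 ^ i * c + a)) d = Ψ d := by
      intro d hd
      rw [← ft_inv i Ψ d hd]
      unfold ft
      refine Finset.sum_congr rfl fun a ha => ?_
      show WW i a d * g (2 ^ i * c + a) = _
      rw [hgc a (Finset.mem_range.1 ha)]
      rfl
    rw [← sub_eq_zero]
    unfold ft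
    rw [← Finset.sum_sub_distrib, add_comm i k, sum_blocks2, add_comm k i]
    refine Finset.sum_eq_zero fun d hd => ?_
    have hd' := Finset.mem_range.1 hd
    have h1 : ∀ b ∈ Finset.range (2 ^ k),
        WW (i + k) (2 ^ k * d + b) x * (μ (2 ^ k * d + b) * ft (i + k) f (2 ^ k * d + b)) -
        WW (i + k) (2 ^ k * d + b) x * (μ (2 ^ k * d + b) * ft (i + k) g (2 ^ k * d + b))
        = (μ (2 ^ k * d) * (Φ d - Ψ d) * WW i (x % 2 ^ i) d) * (WW k c b * WW k (x / 2 ^ i) b) := by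
      intro b hb
      have hb' := Finset.mem_range.1 hb
      rw [ft_block i k c hc f hf d b hb', ft_block i k c hc g hgs d b hb', hgft d hd', WW_symm]
      conv_lhs => rw [hxd]
      rw [WW_factor _ _ _ _ _ _ hxm hb']
      by_cases hdD : d ∈ D
      · have : Ψ d = Φ d := by simp [hΨ, hdD]
        rw [this]; ring
      · have : μ (2 ^ k * d) = μ (2 ^ k * d + b) := by
          refine hμ _ _ (by omega) ?_ ?_
          · rw [add_comm i k, pow_add]; nlinarith
          · rintro z hz ⟨h1, h2⟩
            apply hdD
            rw [hD, Finset.mem_image]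
            refine ⟨z, hz, ?_⟩
            rw [Nat.div_eq_iff (by positivity)]
            constructor
            · rw [mul_comm]; exact h1
            · have : 0 < 2 ^ k := by positivity
              rw [mul_comm] at h2; omega
        rw [this]; ring
    have := Finset.sum_congr rfl h1
    simp only [ft] at this
    rw [this, ← Finset.mul_sum, WW_orth k c _ hc hxe, if_neg (fun h => hxc h.symm), mul_zero]

/-! ### Part B: weak type bound and interpolation -/

lemma block_card (n i c : ℕ) :
    (((Finset.range n).filter (fun a => a / 2 ^ i = c)).card : ℝ) ≤ 2 ^ i := by
  have : (Finset.range n).filter (fun a => a / 2 ^ i = c)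
      ⊆ Finset.Ico (c * 2 ^ i) (c * 2 ^ i + 2 ^ i) := by
    intro a ha
    have h := (Finset.mem_filter.1 ha).2
    have hp : 0 < 2 ^ i := by positivity
    rw [Nat.div_eq_iff hp] at h
    rw [Finset.mem_Ico]; omega
  have h2 := Finset.card_le_card this
  simp only [Nat.card_Ico, Nat.add_sub_cancel_left] at h2
  exact_mod_cast h2

lemma cz (L M : ℕ) (hM : 1 ≤ M) (μ : ℕ → ℝ) (Ξ : Finset ℕ) (hΞ : Ξ.card ≤ M)
    (hμ : PC L μ Ξ) (κ : ℝ) (hκ : 0 < κ) :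
    ∀ i ≤ L, ∀ c < 2 ^ (L - i), ∀ f : ℕ → ℝ, (∀ a, a / 2 ^ i ≠ c → f a = 0) →
      ∑ a ∈ Finset.range (2 ^ L), |f a| ≤ κ * 2 ^ i →
      ∃ (h : ℕ → ℝ) (E : Finset ℕ), (∀ a, a / 2 ^ i ≠ c → h a = 0) ∧
        ∑ a ∈ Finset.range (2 ^ L), h a ^ 2
          ≤ 2 * M * κ * ∑ a ∈ Finset.range (2 ^ L), |f a| ∧
        κ * E.card ≤ ∑ a ∈ Finset.range (2 ^ L), |f a| ∧
        ∀ x < 2 ^ L, x ∉ E → TT L μ f x = TT L μ h x := by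
  have hM' : (1 : ℝ) ≤ M := by exact_mod_cast hM
  intro i
  induction i with
  | zero =>
    intro _ c hc f hf hs
    refine ⟨f, ∅, hf, ?_, by simpa using Finset.sum_nonneg fun a _ => abs_nonneg (f a),
      fun _ _ _ => rfl⟩
    rw [Finset.mul_sum]
    refine Finset.sum_le_sum fun a ha => ?_
    have : |f a| ≤ κ := by
      refine (Finset.single_le_sum (f := fun a => |f a|) (fun a _ => abs_nonneg (f a)) ha).trans ?_
      simpa using hs
    rw [← sq_abs]
    have h0 := abs_nonneg (f a)
    have : |f a| ^ 2 ≤ κ * |f a| := by nlinarith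
    have : κ * |f a| ≤ M * (κ * |f a|) := le_mul_of_one_le_left (by positivity) hM'
    nlinarith
  | succ i ih =>
    intro hi c hc f hf hs
    have hdd : ∀ a : ℕ, a / 2 ^ (i + 1) = a / 2 ^ i / 2 := fun a => by
      rw [pow_succ, Nat.div_div_eq_div_mul]
    have hpL : 2 ^ (L - i) = 2 * 2 ^ (L - (i + 1)) := by
      rw [← pow_succ']; congr 1; omega
    have child : ∀ c' < 2 ^ (L - i), ∀ F : ℕ → ℝ, (∀ a, a / 2 ^ i ≠ c' → F a = 0) →
        ∑ a ∈ Finset.range (2 ^ L), |F a| ≤ 2 * κ * 2 ^ i →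
        ∃ (h : ℕ → ℝ) (E : Finset ℕ), (∀ a, a / 2 ^ i ≠ c' → h a = 0) ∧
        ∑ a ∈ Finset.range (2 ^ L), h a ^ 2
          ≤ 2 * M * κ * ∑ a ∈ Finset.range (2 ^ L), |F a| ∧
        κ * E.card ≤ ∑ a ∈ Finset.range (2 ^ L), |F a| ∧
        ∀ x < 2 ^ L, x ∉ E → TT L μ F x = TT L μ h x := by
      intro c' hc' F hF hFs
      by_cases hk : ∑ a ∈ Finset.range (2 ^ L), |F a| ≤ κ * 2 ^ i
      · exact ih (by omega) c' hc' F hF hk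
      · push Not at hk
        obtain ⟨k, rfl⟩ : ∃ k, L = i + k := ⟨L - i, by omega⟩
        obtain ⟨g, hg1, hg2, hg3⟩ := key_block i k c' M (by simpa using hc') μ Ξ hΞ hμ F hF
        refine ⟨g, (Finset.range (2 ^ (i + k))).filter (fun a => a / 2 ^ i = c'), hg1, ?_, ?_, ?_⟩
        · refine hg2.trans ?_
          set S := ∑ a ∈ Finset.range (2 ^ (i + k)), |F a|
          have hp : (0 : ℝ) < 2 ^ i := by positivity
          have hS : 0 ≤ S := Finset.sum_nonneg fun a _ => abs_nonneg _
          rw [div_mul_eq_mul_div, div_le_iff₀ hp]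
          have : S * S ≤ 2 * κ * 2 ^ i * S := by gcongr
          nlinarith
        · refine le_trans ?_ hk.le
          gcongr
          exact block_card _ _ _
        · intro x hx hxE
          refine hg3 x hx fun h => hxE ?_
          simp [hx, h]
    set f1 : ℕ → ℝ := fun a => if a / 2 ^ i = 2 * c then f a else 0 with hf1
    set f2 : ℕ → ℝ := fun a => if a / 2 ^ i = 2 * c + 1 then f a else 0 with hf2
    have hff : f = fun a => f1 a + f2 a := by
      funext a
      simp only [hf1, hf2]
      by_cases h1 : a / 2 ^ i = 2 * c
      · simp [h1]
      · by_cases h2 : a / 2 ^ i = 2 * c + 1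
        · simp [h2]
        · simp only [h1, h2, if_false, add_zero]
          apply hf
          rw [hdd]; omega
    have habs : ∀ a, |f a| = |f1 a| + |f2 a| := by
      intro a
      conv_lhs => rw [hff]
      simp only [hf1, hf2]
      by_cases h1 : a / 2 ^ i = 2 * c
      · simp [h1]
      · simp [h1]
    have hsum : ∑ a ∈ Finset.range (2 ^ L), |f a| = ∑ a ∈ Finset.range (2 ^ L), |f1 a|
        + ∑ a ∈ Finset.range (2 ^ L), |f2 a| := by
      rw [← Finset.sum_add_distrib]; exact Finset.sum_congr rfl fun a _ => habs a
    have hn1 : 0 ≤ ∑ a ∈ Finset.range (2 ^ L), |f1 a| := Finset.sum_nonneg fun a _ => abs_nonneg _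
    have hn2 : 0 ≤ ∑ a ∈ Finset.range (2 ^ L), |f2 a| := Finset.sum_nonneg fun a _ => abs_nonneg _
    rw [pow_succ] at hs
    obtain ⟨h1, E1, a1, b1, c1, d1⟩ := child (2 * c) (by omega) f1
      (fun a h => by simp [hf1, h]) (by linarith)
    obtain ⟨h2, E2, a2, b2, c2, d2⟩ := child (2 * c + 1) (by omega) f2
      (fun a h => by simp [hf2, h]) (by linarith)
    refine ⟨fun a => h1 a + h2 a, E1 ∪ E2, ?_, ?_, ?_, ?_⟩
    · intro a ha
      rw [hdd] at ha
      simp only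
      rw [a1 a (by omega), a2 a (by omega), add_zero]
    · have : ∀ a, (h1 a + h2 a) ^ 2 = h1 a ^ 2 + h2 a ^ 2 := by
        intro a
        by_cases h : a / 2 ^ i = 2 * c
        · rw [a2 a (by omega)]; simp
        · rw [a1 a h]; simp
      simp only [this]
      rw [Finset.sum_add_distrib, hsum, mul_add]
      exact add_le_add b1 b2
    · rw [hsum]
      have : ((E1 ∪ E2).card : ℝ) ≤ E1.card + E2.card := by
        exact_mod_cast Finset.card_union_le E1 E2
      nlinarith
    · intro x hx hxE
      rw [Finset.mem_union, not_or] at hxE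
      rw [hff, TT_add, TT_add, d1 x hx hxE.1, d2 x hx hxE.2]

lemma card_gt_L2 (n : ℕ) (F : ℕ → ℝ) (l : ℝ) (hl : 0 < l) :
    (((Finset.range n).filter (fun x => l < |F x|)).card : ℝ) * l ^ 2
      ≤ ∑ x ∈ Finset.range n, F x ^ 2 := by
  calc (((Finset.range n).filter (fun x => l < |F x|)).card : ℝ) * l ^ 2
      = ∑ x ∈ (Finset.range n).filter (fun x => l < |F x|), l ^ 2 := by simp
    _ ≤ ∑ x ∈ (Finset.range n).filter (fun x => l < |F x|), F x ^ 2 := by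
        refine Finset.sum_le_sum fun x hx => ?_
        rw [← sq_abs (F x)]
        have := (Finset.mem_filter.1 hx).2
        gcongr
    _ ≤ _ := Finset.sum_le_sum_of_subset_of_nonneg (Finset.filter_subset _ _)
        fun _ _ _ => sq_nonneg _

lemma weak11 (L M : ℕ) (hM : 1 ≤ M) (μ : ℕ → ℝ) (Ξ : Finset ℕ) (hΞ : Ξ.card ≤ M)
    (hμ : PC L μ Ξ) (hb : ∀ b < 2 ^ L, |μ b| ≤ 1) (f : ℕ → ℝ) (l : ℝ) (hl : 0 < l) :
    (((Finset.range (2 ^ L)).filter (fun x => l < |TT L μ f x|)).card : ℝ) * l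
      ≤ 3 * √M * ∑ a ∈ Finset.range (2 ^ L), |f a| := by
  have hM' : (1 : ℝ) ≤ M := by exact_mod_cast hM
  set s := √(M : ℝ) with hs
  have hs1 : 1 ≤ s := by rw [hs]; exact Real.one_le_sqrt.2 hM'
  have hss : s * s = M := Real.mul_self_sqrt (by positivity)
  set S := ∑ a ∈ Finset.range (2 ^ L), |f a| with hS
  have hS0 : 0 ≤ S := Finset.sum_nonneg fun a _ => abs_nonneg _
  set κ := l / s with hκ
  have hκ0 : 0 < κ := by positivity
  have hl' : l = κ * s := by rw [hκ]; field_simp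
  by_cases hc : S ≤ κ * 2 ^ L
  · obtain ⟨h, E, h1, h2, h3, h4⟩ := cz L M hM μ Ξ hΞ hμ κ hκ0 L le_rfl 0 (by positivity)
      (fun a => if a < 2 ^ L then f a else 0)
      (by
        intro a ha
        rw [if_neg]; intro h; exact ha (Nat.div_eq_of_lt h))
      (by
        refine le_trans (le_of_eq ?_) hc
        refine Finset.sum_congr rfl fun a ha => ?_
        rw [if_pos (Finset.mem_range.1 ha)])
    have e1 : ∑ a ∈ Finset.range (2 ^ L), |if a < 2 ^ L then f a else 0| = S :=
      Finset.sum_congr rfl fun a ha => by rw [if_pos (Finset.mem_range.1 ha)]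
    rw [e1] at h2 h3
    have e2 : TT L μ (fun a => if a < 2 ^ L then f a else 0) = TT L μ f := by
      have : ft L (fun a => if a < 2 ^ L then f a else 0) = ft L f := by
        funext b
        exact Finset.sum_congr rfl fun a ha => by simp [Finset.mem_range.1 ha]
      funext x
      simp only [TT, this]
    rw [e2] at h4
    have hsub : (Finset.range (2 ^ L)).filter (fun x => l < |TT L μ f x|) ⊆
        E ∪ (Finset.range (2 ^ L)).filter (fun x => l < |TT L μ h x|) := by
      intro x hx
      rw [Finset.mem_filter] at hx
      rw [Finset.mem_union, Finset.mem_filter]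
      by_cases hxE : x ∈ E
      · exact Or.inl hxE
      · right
        rw [← h4 x (Finset.mem_range.1 hx.1) hxE]; exact hx
    have hcard : (((Finset.range (2 ^ L)).filter (fun x => l < |TT L μ f x|)).card : ℝ) ≤
        E.card + ((Finset.range (2 ^ L)).filter (fun x => l < |TT L μ h x|)).card := by
      exact_mod_cast (Finset.card_le_card hsub).trans (Finset.card_union_le _ _)
    have h5 := (card_gt_L2 (2 ^ L) (TT L μ h) l hl).trans ((TT_L2 L μ h hb).trans h2)
    set n1 : ℝ := (((Finset.range (2 ^ L)).filter (fun x => l < |TT L μ h x|)).card : ℝ)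
    have h6 : n1 * l ≤ 2 * s * S := by
      have : n1 * l * l ≤ 2 * s * S * l := by
        calc n1 * l * l = n1 * l ^ 2 := by ring
          _ ≤ _ := h5
          _ = 2 * s * S * (κ * s) := by rw [← hss]; ring
          _ = _ := by rw [← hl']
      exact le_of_mul_le_mul_right this hl
    calc _ ≤ (E.card + n1) * l := by gcongr
      _ = (κ * E.card) * s + n1 * l := by rw [hl']; ring
      _ ≤ S * s + 2 * s * S := by gcongr
      _ = _ := by ring
  · push Not at hc
    have : (((Finset.range (2 ^ L)).filter (fun x => l < |TT L μ f x|)).card : ℝ) ≤ 2 ^ L := by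
      have := Finset.card_filter_le (Finset.range (2 ^ L)) (fun x => l < |TT L μ f x|)
      rw [Finset.card_range] at this
      exact_mod_cast this
    calc _ ≤ 2 ^ L * l := by gcongr
      _ = (κ * 2 ^ L) * s := by rw [hl']; ring
      _ ≤ S * s := by gcongr
      _ ≤ _ := by nlinarith

lemma I1 (s t : ℝ) (hs : -1 < s) (ht : 0 ≤ t) :
    IntegrableOn (fun l : ℝ => if l < t then l ^ s else 0) (Ioi 0) ∧
    ∫ l in Ioi (0 : ℝ), (if l < t then l ^ s else 0) = t ^ (s + 1) / (s + 1) := by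
  have e : (fun l : ℝ => if l < t then l ^ s else 0) = (Iio t).indicator (fun l => l ^ s) := by
    funext l; simp [Set.indicator]
  have e2 : Ioi (0 : ℝ) ∩ Iio t = Ioo 0 t := rfl
  have e3 : Iio t ∩ Ioi (0 : ℝ) = Ioo 0 t := by rw [inter_comm]; rfl
  rw [e]
  constructor
  · rw [IntegrableOn, integrable_indicator_iff measurableSet_Iio, IntegrableOn,
      Measure.restrict_restrict measurableSet_Iio, e3]
    have := (intervalIntegral.intervalIntegrable_rpow' (a := 0) (b := t) hs)
    rw [intervalIntegrable_iff_integrableOn_Ioo_of_le ht] at this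
    exact this
  · rw [setIntegral_indicator measurableSet_Iio, e2, ← integral_Ioc_eq_integral_Ioo,
      ← intervalIntegral.integral_of_le ht, integral_rpow (Or.inl hs), Real.zero_rpow (by linarith),
      sub_zero]

lemma I2 (s t : ℝ) (hs : s < -1) (ht : 0 < t) :
    IntegrableOn (fun l : ℝ => if l < t then 0 else l ^ s) (Ioi 0) ∧
    ∫ l in Ioi (0 : ℝ), (if l < t then 0 else l ^ s) = t ^ (s + 1) / (-(s + 1)) := by
  have e : (fun l : ℝ => if l < t then 0 else l ^ s) = (Ici t).indicator (fun l => l ^ s) := by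
    funext l; by_cases h : l < t <;> simp [Set.indicator, h]
  have e2 : Ioi (0 : ℝ) ∩ Ici t = Ici t := by
    ext l; simp; intro h; linarith
  have e3 : Ici t ∩ Ioi (0 : ℝ) = Ici t := by rw [inter_comm, e2]
  rw [e]
  constructor
  · rw [IntegrableOn, integrable_indicator_iff measurableSet_Ici, IntegrableOn,
      Measure.restrict_restrict measurableSet_Ici, e3]
    have := integrableOn_Ioi_rpow_of_lt hs ht
    rw [← integrableOn_Ici_iff_integrableOn_Ioi] at this
    exact this
  · rw [setIntegral_indicator measurableSet_Ici, e2, integral_Ici_eq_integral_Ioi,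
      integral_Ioi_rpow_of_lt hs ht, div_neg, neg_div]

lemma marc (p : ℝ) (hp1 : 1 < p) (hp2 : p < 2) (n : ℕ) (W : ℝ) (hW : 0 < W)
    (T : (ℕ → ℝ) → ℕ → ℝ) (hadd : ∀ f g x, T (fun a => f a + g a) x = T f x + T g x)
    (hweak : ∀ f l, 0 < l → (((Finset.range n).filter (fun x => l < |T f x|)).card : ℝ) * l
      ≤ W * ∑ a ∈ Finset.range n, |f a|)
    (hL2 : ∀ f, ∑ x ∈ Finset.range n, T f x ^ 2 ≤ ∑ a ∈ Finset.range n, f a ^ 2)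
    (f : ℕ → ℝ) :
    ∑ x ∈ Finset.range n, |T f x| ^ p ≤
      2 ^ p * (p / (p - 1) + p / (2 - p)) * W ^ (2 - p) * ∑ x ∈ Finset.range n, |f x| ^ p := by
  -- distributional estimate
  have hdist : ∀ l : ℝ, 0 < l →
      ∑ x ∈ Finset.range n, (if l < |T f x| / 2 then (1 : ℝ) else 0) ≤
      ∑ x ∈ Finset.range n, ((if l < |f x| / W then W * |f x| / l else 0)
        + if l < |f x| / W then 0 else |f x| ^ 2 / l ^ 2) := by
    intro l hl
    set f1 : ℕ → ℝ := fun a => if l < |f a| / W then f a else 0 with hf1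
    set f2 : ℕ → ℝ := fun a => if l < |f a| / W then 0 else f a with hf2
    have hff : f = fun a => f1 a + f2 a := by
      funext a; simp only [hf1, hf2]; split_ifs <;> simp
    have h1 := hweak f1 l hl
    have h2 := (card_gt_L2 n (T f2) l hl).trans (hL2 f2)
    have hsub : (Finset.range n).filter (fun x => l < |T f x| / 2) ⊆
        (Finset.range n).filter (fun x => l < |T f1 x|) ∪
        (Finset.range n).filter (fun x => l < |T f2 x|) := by
      intro x hx
      rw [Finset.mem_filter] at hx
      rw [Finset.mem_union, Finset.mem_filter, Finset.mem_filter]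
      by_contra hcon
      have hc1 : |T f1 x| ≤ l := by
        by_contra h; exact hcon (Or.inl ⟨hx.1, not_le.1 h⟩)
      have hc2 : |T f2 x| ≤ l := by
        by_contra h; exact hcon (Or.inr ⟨hx.1, not_le.1 h⟩)
      have h3 : T f x = T f1 x + T f2 x := by conv_lhs => rw [hff, hadd]
      have h4 := abs_add_le (T f1 x) (T f2 x)
      rw [← h3] at h4
      linarith [hx.2]
    have hcard : (((Finset.range n).filter (fun x => l < |T f x| / 2)).card : ℝ) ≤
        ((Finset.range n).filter (fun x => l < |T f1 x|)).card +
        ((Finset.range n).filter (fun x => l < |T f2 x|)).card := by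
      exact_mod_cast (Finset.card_le_card hsub).trans (Finset.card_union_le _ _)
    rw [← Finset.sum_filter, Finset.sum_const, nsmul_eq_mul, mul_one]
    refine hcard.trans ?_
    rw [Finset.sum_add_distrib]
    refine add_le_add ?_ ?_
    · rw [← le_div_iff₀ hl] at h1
      refine h1.trans (le_of_eq ?_)
      rw [mul_div_assoc, Finset.sum_div, Finset.mul_sum]
      refine Finset.sum_congr rfl fun x _ => ?_
      simp only [hf1]
      split_ifs
      · ring
      · simp
    · rw [← le_div_iff₀ (by positivity)] at h2
      refine h2.trans (le_of_eq ?_)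
      rw [Finset.sum_div]
      refine Finset.sum_congr rfl fun x _ => ?_
      simp only [hf2]; split_ifs <;> simp
  set A : ℕ → ℝ → ℝ := fun x l => p * (if l < |T f x| / 2 then l ^ (p - 1) else 0) with hA
  set B : ℕ → ℝ → ℝ := fun x l => (p * W * |f x|) * (if l < |f x| / W then l ^ (p - 2) else 0) with hB
  set D : ℕ → ℝ → ℝ := fun x l => (p * |f x| ^ 2) * (if l < |f x| / W then 0 else l ^ (p - 3)) with hD
  have iA : ∀ x, IntegrableOn (A x) (Ioi 0) := fun x =>
    (I1 (p - 1) (|T f x| / 2) (by linarith) (by positivity)).1.const_mul _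
  have iB : ∀ x, IntegrableOn (B x) (Ioi 0) := fun x =>
    (I1 (p - 2) (|f x| / W) (by linarith) (by positivity)).1.const_mul _
  have iD : ∀ x, IntegrableOn (D x) (Ioi 0) := by
    intro x
    by_cases h : f x = 0
    · have : D x = fun _ => 0 := by funext l; simp [hD, h]
      rw [this]; exact integrableOn_zero
    · exact (I2 (p - 3) (|f x| / W) (by linarith) (div_pos (abs_pos.2 h) hW)).1.const_mul _
  have vA : ∀ x, ∫ l in Ioi (0 : ℝ), A x l = (|T f x| / 2) ^ p := by
    intro x
    simp only [hA]
    rw [integral_const_mul, (I1 (p - 1) (|T f x| / 2) (by linarith) (by positivity)).2]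
    rw [sub_add_cancel]; field_simp
  have hpp : ∀ x, f x ≠ 0 → ∀ s : ℝ, (|f x| / W) ^ s = |f x| ^ s / W ^ s := fun x _ s =>
    Real.div_rpow (abs_nonneg _) hW.le s
  have vB : ∀ x, ∫ l in Ioi (0 : ℝ), B x l = p / (p - 1) * W ^ (2 - p) * |f x| ^ p := by
    intro x
    simp only [hB]
    rw [integral_const_mul, (I1 (p - 2) (|f x| / W) (by linarith) (by positivity)).2]
    by_cases h : f x = 0
    · rw [h]; simp [Real.zero_rpow (show p ≠ 0 by linarith)]
    · have hx : 0 < |f x| := abs_pos.2 h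
      have hw : W ^ (2 - p) = W / W ^ (p - 1) := by
        rw [show (2 - p) = 1 - (p - 1) by ring, Real.rpow_sub hW, Real.rpow_one]
      have hf' : |f x| ^ (p - 1) = |f x| ^ p / |f x| := Real.rpow_sub_one hx.ne' p
      rw [hpp x h, show p - 2 + 1 = p - 1 by ring, hw, hf']
      have : p - 1 ≠ 0 := by linarith
      have : W ^ (p - 1) ≠ 0 := by positivity
      generalize W ^ (p - 1) = Z at *
      field_simp
  have vD : ∀ x, ∫ l in Ioi (0 : ℝ), D x l = p / (2 - p) * W ^ (2 - p) * |f x| ^ p := by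
    intro x
    simp only [hD]
    rw [integral_const_mul]
    by_cases h : f x = 0
    · rw [h]; simp [Real.zero_rpow (show p ≠ 0 by linarith)]
    · have hx : 0 < |f x| := abs_pos.2 h
      rw [(I2 (p - 3) (|f x| / W) (by linarith) (div_pos (abs_pos.2 h) hW)).2]
      rw [hpp x h, show p - 3 + 1 = p - 2 by ring, show (2 - p) = -(p - 2) by ring,
        Real.rpow_neg hW.le, Real.rpow_sub hx p 2, Real.rpow_two]
      have : p - 2 ≠ 0 := by linarith
      have : W ^ (p - 2) ≠ 0 := by positivity
      field_simp
  have main : ∫ l in Ioi (0 : ℝ), ∑ x ∈ Finset.range n, A x l ≤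
      ∫ l in Ioi (0 : ℝ), ∑ x ∈ Finset.range n, (B x l + D x l) := by
    refine setIntegral_mono_on (integrable_finsetSum _ fun x _ => iA x)
      (integrable_finsetSum _ fun x _ => (iB x).add (iD x)) measurableSet_Ioi ?_
    intro l hl
    have hl : 0 < l := hl
    have h := mul_le_mul_of_nonneg_left (hdist l hl) (show 0 ≤ p * l ^ (p - 1) by positivity)
    rw [Finset.mul_sum, Finset.mul_sum] at h
    refine le_trans (le_of_eq ?_) (h.trans (le_of_eq ?_))
    · refine Finset.sum_congr rfl fun x _ => ?_
      simp only [hA]; split_ifs <;> simp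
    · refine Finset.sum_congr rfl fun x _ => ?_
      simp only [hB, hD]
      split_ifs
      · rw [show p - 1 = p - 2 + 1 by ring, Real.rpow_add_one hl.ne']; field_simp; ring
      · rw [show p - 1 = p - 3 + 2 by ring, Real.rpow_add hl, Real.rpow_two]; field_simp; ring
  rw [integral_finsetSum _ fun x _ => iA x,
    integral_finsetSum (f := fun x l => B x l + D x l) _ fun x _ => (iB x).add (iD x)] at main
  have e1 : ∀ x, ∫ l in Ioi (0 : ℝ), (B x l + D x l)
      = (p / (p - 1) + p / (2 - p)) * W ^ (2 - p) * |f x| ^ p := by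
    intro x
    rw [integral_add (iB x) (iD x), vB, vD]; ring
  simp only [vA, e1] at main
  have e2 : ∀ x, (|T f x| / 2) ^ p = (2 ^ p)⁻¹ * |T f x| ^ p := by
    intro x
    rw [Real.div_rpow (abs_nonneg _) (by norm_num)]; ring
  simp only [e2] at main
  rw [← Finset.mul_sum, ← Finset.mul_sum, inv_mul_le_iff₀ (by positivity)] at main
  refine main.trans (le_of_eq ?_)
  ring

/-- The bilinear form. -/
lemma form_eq (L : ℕ) (μ f g : ℕ → ℝ) :
    ∑ b ∈ Finset.range (2 ^ L), μ b * ft L f b * ft L g b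
      = 2 ^ L * ∑ x ∈ Finset.range (2 ^ L), TT L μ f x * g x := by
  simp only [TT]
  rw [Finset.mul_sum]
  have : ∀ x ∈ Finset.range (2 ^ L), 2 ^ L * ((2 ^ L : ℝ)⁻¹ * ft L (fun b => μ b * ft L f b) x * g x)
      = ∑ b ∈ Finset.range (2 ^ L), μ b * ft L f b * (WW L x b * g x) := by
    intro x _
    have hp : (2 ^ L : ℝ) ≠ 0 := by positivity
    rw [mul_assoc, mul_inv_cancel_left₀ hp, ft, Finset.sum_mul]
    refine Finset.sum_congr rfl fun b _ => ?_
    rw [WW_symm]; ring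
  rw [Finset.sum_congr rfl this, Finset.sum_comm]
  refine Finset.sum_congr rfl fun b _ => ?_
  rw [← Finset.mul_sum]; rfl

lemma fin_lt2 (p p' : ℝ) (hp1 : 1 < p) (hp2 : p ≤ 2) (hpp : p.HolderConjugate p') :
    ∃ C : ℝ, 0 < C ∧ ∀ (L M : ℕ) (_ : 1 ≤ M) (μ : ℕ → ℝ) (Ξ : Finset ℕ) (_ : Ξ.card ≤ M)
      (_ : PC L μ Ξ) (_ : ∀ b < 2 ^ L, |μ b| ≤ 1) (f g : ℕ → ℝ),
      |∑ b ∈ Finset.range (2 ^ L), μ b * ft L f b * ft L g b| ≤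
        C * (M : ℝ) ^ (1 / p - 1 / 2) * 2 ^ L * (∑ x ∈ Finset.range (2 ^ L), |f x| ^ p) ^ (1 / p)
          * (∑ x ∈ Finset.range (2 ^ L), |g x| ^ p') ^ (1 / p') := by
  have hp0 : 0 < p := by linarith
  -- reduce to the `L^p` bound
  suffices H : ∃ C : ℝ, 0 < C ∧ ∀ (L M : ℕ) (_ : 1 ≤ M) (μ : ℕ → ℝ) (Ξ : Finset ℕ)
      (_ : Ξ.card ≤ M) (_ : PC L μ Ξ) (_ : ∀ b < 2 ^ L, |μ b| ≤ 1) (f : ℕ → ℝ),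
      (∑ x ∈ Finset.range (2 ^ L), |TT L μ f x| ^ p) ^ (1 / p) ≤ C * (M : ℝ) ^ (1 / p - 1 / 2)
        * (∑ x ∈ Finset.range (2 ^ L), |f x| ^ p) ^ (1 / p) by
    obtain ⟨C, hC, h⟩ := H
    refine ⟨C, hC, fun L M hM μ Ξ hΞ hPC hb f g => ?_⟩
    rw [form_eq, abs_mul, abs_of_pos (show (0 : ℝ) < 2 ^ L by positivity)]
    have h1 : |∑ x ∈ Finset.range (2 ^ L), TT L μ f x * g x| ≤
        (∑ x ∈ Finset.range (2 ^ L), |TT L μ f x| ^ p) ^ (1 / p) *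
        (∑ x ∈ Finset.range (2 ^ L), |g x| ^ p') ^ (1 / p') := by
      refine (Finset.abs_sum_le_sum_abs _ _).trans ?_
      simp only [abs_mul]
      have := Real.inner_le_Lp_mul_Lq (Finset.range (2 ^ L)) (fun x => |TT L μ f x|)
        (fun x => |g x|) hpp
      simpa using this
    calc _ ≤ 2 ^ L * ((C * (M : ℝ) ^ (1 / p - 1 / 2)
        * (∑ x ∈ Finset.range (2 ^ L), |f x| ^ p) ^ (1 / p)) *
        (∑ x ∈ Finset.range (2 ^ L), |g x| ^ p') ^ (1 / p')) := by
          gcongr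
          refine h1.trans ?_
          gcongr
          exact h L M hM μ Ξ hΞ hPC hb f
      _ = _ := by ring
  rcases hp2.lt_or_eq with hlt | rfl
  · obtain ⟨K, hK⟩ : ∃ K, K = 2 ^ p * (p / (p - 1) + p / (2 - p)) := ⟨_, rfl⟩
    have hK0 : 0 < K := by
      have : 0 < p - 1 := by linarith
      have : 0 < 2 - p := by linarith
      rw [hK]; positivity
    refine ⟨K ^ (1 / p) * (3 : ℝ) ^ (2 / p - 1), by positivity, ?_⟩
    intro L M hM μ Ξ hΞ hPC hb f
    have hM' : (0 : ℝ) < M := by exact_mod_cast hM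
    have := marc p hp1 hlt (2 ^ L) (3 * √M) (by positivity) (TT L μ) (TT_add L μ)
      (fun f l hl => weak11 L M hM μ Ξ hΞ hPC hb f l hl) (fun f => TT_L2 L μ f hb) f
    rw [← hK] at this
    have h0 : 0 ≤ ∑ x ∈ Finset.range (2 ^ L), |f x| ^ p :=
      Finset.sum_nonneg fun x _ => by positivity
    calc _ ≤ (K * (3 * √M) ^ (2 - p) * ∑ x ∈ Finset.range (2 ^ L), |f x| ^ p) ^ (1 / p) := by
          gcongr
      _ = K ^ (1 / p) * ((3 * √M) ^ (2 - p)) ^ (1 / p)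
          * (∑ x ∈ Finset.range (2 ^ L), |f x| ^ p) ^ (1 / p) := by
          rw [Real.mul_rpow (by positivity) h0, Real.mul_rpow hK0.le (by positivity)]
      _ = _ := by
          have e1 : (2 - p) * (1 / p) = 2 / p - 1 := by field_simp
          rw [← Real.rpow_mul (by positivity), e1, Real.mul_rpow (by norm_num) (by positivity),
            Real.sqrt_eq_rpow, ← Real.rpow_mul hM'.le,
            show 1 / 2 * (2 / p - 1) = 1 / p - 1 / 2 by ring]
          ring
  · refine ⟨1, one_pos, ?_⟩
    intro L M hM μ Ξ hΞ hPC hb f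
    simp only [sub_self, Real.rpow_zero, one_mul, Real.rpow_two, sq_abs]
    have := TT_L2 L μ f hb
    gcongr

/-- The finite bound for all `1 < q < ∞`. -/
lemma fin_bound (q q' : ℝ) (hq1 : 1 < q) (hqq : q.HolderConjugate q') :
    ∃ C : ℝ, 0 < C ∧ ∀ (L M : ℕ) (_ : 1 ≤ M) (μ : ℕ → ℝ) (Ξ : Finset ℕ) (_ : Ξ.card ≤ M)
      (_ : PC L μ Ξ) (A : ℝ) (_ : 0 < A) (_ : ∀ b < 2 ^ L, |μ b| ≤ A) (f g : ℕ → ℝ),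
      |∑ b ∈ Finset.range (2 ^ L), μ b * ft L f b * ft L g b| ≤
        C * (M : ℝ) ^ |1 / q - 1 / 2| * A * 2 ^ L *
          (∑ x ∈ Finset.range (2 ^ L), |f x| ^ q) ^ (1 / q)
          * (∑ x ∈ Finset.range (2 ^ L), |g x| ^ q') ^ (1 / q') := by
  suffices H : ∃ C : ℝ, 0 < C ∧ ∀ (L M : ℕ) (_ : 1 ≤ M) (μ : ℕ → ℝ) (Ξ : Finset ℕ)
      (_ : Ξ.card ≤ M) (_ : PC L μ Ξ) (_ : ∀ b < 2 ^ L, |μ b| ≤ 1) (f g : ℕ → ℝ),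
      |∑ b ∈ Finset.range (2 ^ L), μ b * ft L f b * ft L g b| ≤
        C * (M : ℝ) ^ |1 / q - 1 / 2| * 2 ^ L *
          (∑ x ∈ Finset.range (2 ^ L), |f x| ^ q) ^ (1 / q)
          * (∑ x ∈ Finset.range (2 ^ L), |g x| ^ q') ^ (1 / q') by
    obtain ⟨C, hC, h⟩ := H
    refine ⟨C, hC, fun L M hM μ Ξ hΞ hPC A hA hb f g => ?_⟩
    have := h L M hM (fun b => A⁻¹ * μ b) Ξ hΞ
      (fun x y h1 h2 h3 => by simp only; rw [hPC x y h1 h2 h3])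
      (fun b hb' => by
        rw [abs_mul, abs_of_pos (inv_pos.2 hA), inv_mul_le_iff₀ hA]; simpa using hb b hb') f g
    simp only [mul_assoc] at this ⊢
    rw [← Finset.mul_sum, abs_mul, abs_of_pos (inv_pos.2 hA), inv_mul_le_iff₀ hA] at this
    refine this.trans (le_of_eq (by ring))
  have hq0 : 0 < q := by linarith
  rcases le_total q 2 with h2 | h2
  · obtain ⟨C, hC, h⟩ := fin_lt2 q q' hq1 h2 hqq
    refine ⟨C, hC, ?_⟩
    have : 0 ≤ 1 / q - 1 / 2 := by
      rw [sub_nonneg]; exact one_div_le_one_div_of_le hq0 h2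
    rw [abs_of_nonneg this]; exact h
  · have hq'1 : 1 < q' := hqq.symm.lt
    have hinv : 1 / q + 1 / q' = 1 := by
      have := hqq.inv_add_inv_eq_one; simpa [one_div] using this
    have hq1' : 1 / q ≤ 1 / 2 := one_div_le_one_div_of_le (by norm_num) h2
    have hq'2 : q' ≤ 2 := by
      have : 1 / 2 ≤ 1 / q' := by linarith
      exact (one_div_le_one_div (by norm_num) (by linarith)).1 this
    obtain ⟨C, hC, h⟩ := fin_lt2 q' q hq'1 hq'2 hqq.symm
    refine ⟨C, hC, fun L M hM μ Ξ hΞ hPC hb f g => ?_⟩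
    have h3 := h L M hM μ Ξ hΞ hPC hb g f
    have e : |1 / q - 1 / 2| = 1 / q' - 1 / 2 := by
      rw [abs_of_nonpos (by linarith)]; linarith
    rw [e]
    have e2 : ∑ b ∈ Finset.range (2 ^ L), μ b * ft L f b * ft L g b
        = ∑ b ∈ Finset.range (2 ^ L), μ b * ft L g b * ft L f b :=
      Finset.sum_congr rfl fun b _ => by ring
    rw [e2]
    refine h3.trans (le_of_eq (by ring))

/-! ### Part D: decomposition of functions of bounded r-variation -/

/-- variation up to `ξ` -/
def vv (r : ℝ) (m : ℝ → ℝ) (ξ : ℝ) : ℝ≥0∞ :=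
  ⨆ (N : ℕ) (u : Fin (N + 1) → ℝ) (_ : StrictMono u) (_ : ∀ i, u i ∈ Ici (0 : ℝ))
    (_ : u (Fin.last N) = ξ),
      ∑ i : Fin N, (‖m (u i.succ) - m (u i.castSucc)‖₊ : ℝ≥0∞) ^ r

lemma le_vv (r : ℝ) (m : ℝ → ℝ) (ξ : ℝ) (N : ℕ) (u : Fin (N + 1) → ℝ) (h1 : StrictMono u)
    (h2 : ∀ i, u i ∈ Ici (0 : ℝ)) (h3 : u (Fin.last N) = ξ) :
    ∑ i : Fin N, (‖m (u i.succ) - m (u i.castSucc)‖₊ : ℝ≥0∞) ^ r ≤ vv r m ξ := by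
  unfold vv
  refine le_iSup_of_le N (le_iSup_of_le u (le_iSup_of_le h1 (le_iSup_of_le h2
    (le_iSup_of_le h3 le_rfl))))

lemma vv_le (r : ℝ) (hr : 1 ≤ r) (m : ℝ → ℝ) (ξ : ℝ) :
    vv r m ξ ≤ (vnorm r (Ici (0 : ℝ)) m) ^ r := by
  unfold vv
  refine iSup_le fun N => iSup_le fun u => iSup_le fun h1 => iSup_le fun h2 => iSup_le fun h3 => ?_
  have : (∑ i : Fin N, (‖m (u i.succ) - m (u i.castSucc)‖₊ : ℝ≥0∞) ^ r) ^ (1 / r)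
      ≤ vnorm r (Ici (0 : ℝ)) m := by
    unfold vnorm
    refine le_add_left ?_
    exact le_iSup_of_le N (le_iSup_of_le u (le_iSup_of_le h1 (le_iSup_of_le h2 le_rfl)))
  have h := ENNReal.rpow_le_rpow this (show 0 ≤ r by linarith)
  rwa [← ENNReal.rpow_mul, one_div, inv_mul_cancel₀ (by linarith), ENNReal.rpow_one] at h

lemma vv_step (r : ℝ) (hr : 1 ≤ r) (m : ℝ → ℝ) (ξ η : ℝ) (hξ : 0 ≤ ξ) (hη : ξ < η) :
    vv r m ξ + (‖m η - m ξ‖₊ : ℝ≥0∞) ^ r ≤ vv r m η := by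
  set c := (‖m η - m ξ‖₊ : ℝ≥0∞) ^ r with hc
  have hctop : c ≠ ⊤ := ENNReal.rpow_ne_top_of_nonneg (by linarith) ENNReal.coe_ne_top
  have key : ∀ (N : ℕ) (u : Fin (N + 1) → ℝ), StrictMono u → (∀ i, u i ∈ Ici (0 : ℝ)) →
      u (Fin.last N) = ξ →
      ∑ i : Fin N, (‖m (u i.succ) - m (u i.castSucc)‖₊ : ℝ≥0∞) ^ r + c ≤ vv r m η := by
    intro N u h1 h2 h3
    have := le_vv r m η (N + 1) (Fin.snoc (α := fun _ => ℝ) u η) ?_ ?_ (by simp)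
    · refine le_trans (le_of_eq ?_) this
      rw [Fin.sum_univ_castSucc]
      congr 1
      · refine Finset.sum_congr rfl fun i _ => ?_
        rw [Fin.succ_castSucc, Fin.snoc_castSucc, Fin.snoc_castSucc]
      · rw [Fin.succ_last, Fin.snoc_last, Fin.snoc_castSucc, h3]
    · rw [Fin.strictMono_iff_lt_succ]
      intro i
      refine Fin.lastCases ?_ (fun j => ?_) i
      · rw [Fin.succ_last, Fin.snoc_last, Fin.snoc_castSucc, h3]; exact hη
      · rw [Fin.succ_castSucc, Fin.snoc_castSucc, Fin.snoc_castSucc]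
        exact h1 (Fin.castSucc_lt_succ)
    · intro i
      refine Fin.lastCases ?_ (fun j => ?_) i
      · rw [Fin.snoc_last]; exact hξ.trans hη.le
      · rw [Fin.snoc_castSucc]; exact h2 j
  have h0 : c ≤ vv r m η := by
    have := key 0 (fun _ => ξ) (by intro a b h; omega) (fun _ => hξ) rfl
    simpa using this
  have h1 : vv r m ξ ≤ vv r m η - c := by
    conv_lhs => unfold vv
    refine iSup_le fun N => iSup_le fun u => iSup_le fun h1 => iSup_le fun h2 =>
      iSup_le fun h3 => ?_
    exact ENNReal.le_sub_of_add_le_right hctop (key N u h1 h2 h3)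
  calc _ ≤ vv r m η - c + c := by gcongr
    _ = _ := tsub_add_cancel_of_le h0

lemma var_fun (r : ℝ) (hr : 1 ≤ r) (m : ℝ → ℝ) (V : ℝ) (hV : 0 < V)
    (hm : vnorm r (Ici (0 : ℝ)) m ≤ ENNReal.ofReal V) :
    ∃ w : ℝ → ℝ, Monotone w ∧ (∀ ξ, 0 ≤ w ξ) ∧ (∀ ξ, w ξ ≤ 1) ∧
      ∀ ξ η, 0 ≤ ξ → ξ ≤ η → |m η - m ξ| ≤ V * (w η - w ξ) ^ (1 / r) := by
  have hr0 : 0 < r := by linarith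
  have hfin : ∀ ξ, vv r m ξ ≤ ENNReal.ofReal (V ^ r) := fun ξ => by
    rw [← ENNReal.ofReal_rpow_of_pos hV]
    exact (vv_le r hr m ξ).trans (ENNReal.rpow_le_rpow hm hr0.le)
  have hne : ∀ ξ, vv r m ξ ≠ ⊤ := fun ξ => ne_top_of_le_ne_top ENNReal.ofReal_ne_top (hfin ξ)
  have hVr : 0 < V ^ r := by positivity
  have step : ∀ ξ η, 0 ≤ ξ → ξ ≤ η →
      |m η - m ξ| ^ r ≤ (vv r m η).toReal - (vv r m ξ).toReal := by
    intro ξ η hξ hη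
    rcases hη.eq_or_lt with rfl | hlt
    · simp [Real.zero_rpow hr0.ne']
    · have h := ENNReal.toReal_mono (hne η) (vv_step r hr m ξ η hξ hlt)
      rw [ENNReal.toReal_add (hne ξ)
        (ENNReal.rpow_ne_top_of_nonneg (by linarith) ENNReal.coe_ne_top),
        ← ENNReal.toReal_rpow, ENNReal.coe_toReal, coe_nnnorm, Real.norm_eq_abs] at h
      linarith
  refine ⟨fun ξ => (vv r m (max ξ 0)).toReal / V ^ r, ?_, ?_, ?_, ?_⟩
  · intro ξ η h
    simp only
    have := step (max ξ 0) (max η 0) (le_max_right _ _) (max_le_max_right _ h)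
    have h2 : 0 ≤ |m (max η 0) - m (max ξ 0)| ^ r := by positivity
    exact div_le_div_of_nonneg_right (by linarith) hVr.le
  · intro ξ; positivity
  · intro ξ
    rw [div_le_one hVr]
    have := ENNReal.toReal_mono ENNReal.ofReal_ne_top (hfin (max ξ 0))
    rwa [ENNReal.toReal_ofReal hVr.le] at this
  · intro ξ η h1 h2
    have := step ξ η h1 h2
    simp only [max_eq_left h1, max_eq_left (h1.trans h2)]
    rw [← sub_div]
    have e : |m η - m ξ| = (|m η - m ξ| ^ r) ^ (1 / r) := by
      rw [← Real.rpow_mul (abs_nonneg _), mul_one_div_cancel hr0.ne', Real.rpow_one]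
    rw [e]
    have hd : 0 ≤ (vv r m η).toReal - (vv r m ξ).toReal := le_trans (by positivity) this
    calc _ ≤ ((vv r m η).toReal - (vv r m ξ).toReal) ^ (1 / r) := by gcongr
      _ = _ := by
        rw [Real.div_rpow hd hVr.le, ← Real.rpow_mul hV.le, mul_one_div_cancel hr0.ne',
          Real.rpow_one]
        field_simp

lemma sup_bd (r : ℝ) (m : ℝ → ℝ) (V : ℝ) (hV : 0 < V)
    (hm : vnorm r (Ici (0 : ℝ)) m ≤ ENNReal.ofReal V) (ξ : ℝ) (hξ : 0 ≤ ξ) : |m ξ| ≤ V := by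
  have : (‖m ξ‖₊ : ℝ≥0∞) ≤ ENNReal.ofReal V := by
    refine le_trans ?_ hm
    unfold vnorm
    refine le_add_right ?_
    exact le_iSup₂_of_le (f := fun ξ (_ : ξ ∈ Ici (0 : ℝ)) => (‖m ξ‖₊ : ℝ≥0∞)) ξ hξ le_rfl
  have h := ENNReal.toReal_mono ENNReal.ofReal_ne_top this
  rwa [ENNReal.toReal_ofReal hV.le, ENNReal.coe_toReal, coe_nnnorm, Real.norm_eq_abs] at h

lemma floor_close (a b : ℝ) (k : ℕ) (ha : 0 ≤ a) (hb : 0 ≤ b)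
    (h : ⌊a * 2 ^ k⌋₊ = ⌊b * 2 ^ k⌋₊) : a - b ≤ (1 / 2) ^ k := by
  have h1 := Nat.lt_floor_add_one (a * 2 ^ k)
  have h2 := Nat.floor_le (show 0 ≤ b * 2 ^ k by positivity)
  rw [h] at h1
  have : (a - b) * 2 ^ k ≤ 1 := by linarith
  rw [one_div, inv_pow, ← one_div, le_div_iff₀ (by positivity)]
  exact this

lemma vdecomp (r : ℝ) (hr : 1 ≤ r) (m : ℝ → ℝ) (V : ℝ) (hV : 0 < V)
    (hm : vnorm r (Ici (0 : ℝ)) m ≤ ENNReal.ofReal V) (v : Set ℝ) (hv0 : v ⊆ Ici 0)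
    (hv : v.OrdConnected) (hs : ∀ x, m x ≠ 0 → x ∈ v) :
    ∃ (s : ℕ → ℝ → ℝ) (A : ℕ → ℕ → Set ℝ),
      (∀ k, Measurable (s k)) ∧ (∀ k z, (A k z).OrdConnected) ∧
      (∀ k ξ, ξ ∉ v → s k ξ = 0) ∧ (∀ k ξ, |s k ξ| ≤ V) ∧
      (∀ k ξ, |m ξ - s k ξ| ≤ V * (2 ^ (-(1 / r)) : ℝ) ^ k) ∧
      (∀ k' k, k' ≤ k → ∀ ξ η, (∀ z ∈ Finset.range (2 ^ k + 1), ξ ∈ A k z ↔ η ∈ A k z) →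
        s k' ξ = s k' η) := by
  have hr0 : 0 < r := by linarith
  obtain ⟨w, hmono, hw0, hw1, hw⟩ := var_fun r hr m V hV hm
  set c : ℕ → ℝ → ℕ := fun k ξ => ⌊w ξ * 2 ^ k⌋₊ with hc
  have hcm : ∀ k, Monotone (c k) := fun k ξ η h =>
    Nat.floor_mono (mul_le_mul_of_nonneg_right (hmono h) (by positivity))
  set P : ℕ → ℕ → ℝ := fun k z => if h : ∃ η, η ∈ v ∧ c k η = z then h.choose else 0 with hP
  have hPs : ∀ k ξ, ξ ∈ v → P k (c k ξ) ∈ v ∧ c k (P k (c k ξ)) = c k ξ := by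
    intro k ξ hξ
    have h : ∃ η, η ∈ v ∧ c k η = c k ξ := ⟨ξ, hξ, rfl⟩
    simp only [hP, dif_pos h]
    exact h.choose_spec
  set s : ℕ → ℝ → ℝ := fun k ξ => if ξ ∈ v then m (P k (c k ξ)) else 0 with hsd
  have hρ : ∀ k : ℕ, (((1 : ℝ) / 2) ^ k) ^ (1 / r) = ((2 : ℝ) ^ (-(1 / r))) ^ k := by
    intro k
    rw [← Real.rpow_natCast, ← Real.rpow_natCast, ← Real.rpow_mul (by norm_num),
      ← Real.rpow_mul (by norm_num), one_div, Real.inv_rpow (by norm_num),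
      ← Real.rpow_neg (by norm_num)]
    congr 1; ring
  refine ⟨s, fun k z => {ξ | ξ ∈ v ∧ c k ξ = z}, ?_, ?_, ?_, ?_, ?_, ?_⟩
  · intro k
    refine Measurable.ite hv.measurableSet ?_ measurable_const
    exact (measurable_of_countable (fun z : ℕ => m (P k z))).comp (hcm k).measurable
  · intro k z
    constructor
    rintro x ⟨hx, hx2⟩ y ⟨hy, hy2⟩ t ⟨h1, h2⟩
    refine ⟨hv.out hx hy ⟨h1, h2⟩, ?_⟩
    have := hcm k h1
    have := hcm k h2
    omega
  · intro k ξ h; simp [hsd, h]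
  · intro k ξ
    simp only [hsd]
    split_ifs with h
    · exact sup_bd r m V hV hm _ (hv0 (hPs k ξ h).1)
    · simpa using hV.le
  · intro k ξ
    simp only [hsd]
    split_ifs with h
    · obtain ⟨h1, h2⟩ := hPs k ξ h
      set η := P k (c k ξ)
      rw [← hρ]
      rcases le_total ξ η with hle | hle
      · rw [abs_sub_comm]
        refine (hw ξ η (hv0 h) hle).trans ?_
        have h3 := floor_close (w η) (w ξ) k (hw0 _) (hw0 _) h2
        have h4 : 0 ≤ w η - w ξ := sub_nonneg.2 (hmono hle)
        gcongr
      · refine (hw η ξ (hv0 h1) hle).trans ?_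
        have h3 := floor_close (w ξ) (w η) k (hw0 _) (hw0 _) h2.symm
        have h4 : 0 ≤ w ξ - w η := sub_nonneg.2 (hmono hle)
        gcongr
    · have : m ξ = 0 := by by_contra h'; exact h (hs ξ h')
      rw [this]; simp; positivity
  · intro k' k hk ξ η h
    have hrange : ∀ x, c k x ∈ Finset.range (2 ^ k + 1) := by
      intro x
      rw [Finset.mem_range, Nat.lt_succ_iff]
      refine Nat.floor_le_of_le ?_
      push_cast
      have : (0 : ℝ) < 2 ^ k := by positivity
      nlinarith [hw1 x]
    have hdiv : ∀ x, c k' x = c k x / 2 ^ (k - k') := by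
      intro x
      simp only [hc]
      rw [← Nat.floor_div_natCast]
      congr 1
      push_cast
      rw [eq_div_iff (by positivity), mul_assoc, ← pow_add]
      congr 2; omega
    simp only [hsd]
    by_cases hξ : ξ ∈ v
    · have := (h _ (hrange ξ)).1 ⟨hξ, rfl⟩
      have h2 : c k' ξ = c k' η := by rw [hdiv, hdiv, this.2]
      rw [if_pos hξ, if_pos this.1, h2]
    · by_cases hη : η ∈ v
      · exact absurd ((h _ (hrange η)).2 ⟨hη, rfl⟩).1 hξ
      · rw [if_neg hξ, if_neg hη]

/-- piecewise constant with at most `N` break points -/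
def PCR (u : ℝ → ℝ) (N : ℕ) : Prop :=
  ∃ Ξ : Finset ℝ, Ξ.card ≤ N ∧
    ∀ x y, x ≤ y → (∀ z ∈ Ξ, ¬ (x ≤ z ∧ z ≤ y)) → u x = u y

lemma ord_break (A : Set ℝ) (hA : A.OrdConnected) (x y : ℝ) (hxy : x ≤ y)
    (h1 : ¬ (x ≤ sInf A ∧ sInf A ≤ y)) (h2 : ¬ (x ≤ sSup A ∧ sSup A ≤ y)) : x ∈ A ↔ y ∈ A := by
  constructor
  · intro hx
    by_contra hy
    apply h2
    have hub : ∀ z ∈ A, z ≤ y := by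
      intro z hz
      by_contra hzy
      exact hy (hA.out hx hz ⟨hxy, (not_le.1 hzy).le⟩)
    exact ⟨le_csSup ⟨y, hub⟩ hx, csSup_le ⟨x, hx⟩ hub⟩
  · intro hy
    by_contra hx
    apply h1
    have hlb : ∀ z ∈ A, x ≤ z := by
      intro z hz
      by_contra hzx
      exact hx (hA.out hz hy ⟨(not_le.1 hzx).le, hxy⟩)
    exact ⟨le_csInf ⟨y, hy⟩ hlb, csInf_le ⟨x, hlb⟩ hy⟩

lemma disj_sum (Y : Finset (Set ℝ)) (hY : (Y : Set (Set ℝ)).PairwiseDisjoint id) (F : Set ℝ → ℝ)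
    (ξ B : ℝ) (hB : 0 ≤ B) (h0 : ∀ v ∈ Y, ξ ∉ v → F v = 0) (hF : ∀ v ∈ Y, |F v| ≤ B) :
    |∑ v ∈ Y, F v| ≤ B := by
  by_cases h : ∃ v ∈ Y, ξ ∈ v
  · obtain ⟨v, hv, hξ⟩ := h
    rw [Finset.sum_eq_single v]
    · exact hF v hv
    · intro v' hv' hne
      refine h0 v' hv' fun hξ' => ?_
      exact Set.disjoint_left.1 (hY hv' hv hne) hξ' hξ
    · intro h; exact absurd hv h
  · push Not at h
    rw [Finset.sum_eq_zero fun v hv => h0 v hv (h v hv)]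
    simpa using hB

lemma total_decomp (r : ℝ) (hr : 1 ≤ r) (Y : Finset (Set ℝ)) (hYne : Y.Nonempty)
    (hY : (Y : Set (Set ℝ)).PairwiseDisjoint id)
    (hv : ∀ v ∈ Y, v ⊆ Ici 0 ∧ v.OrdConnected) (m : Set ℝ → ℝ → ℝ)
    (hs : ∀ v ∈ Y, ∀ x, m v x ≠ 0 → x ∈ v) (V : ℝ) (hV : 0 < V)
    (hm : ∀ v ∈ Y, vnorm r (Ici (0 : ℝ)) (m v) ≤ ENNReal.ofReal V) :
    ∃ U : ℕ → ℝ → ℝ, (∀ k, Measurable (U k)) ∧ (∀ k, PCR (U k) (4 * Y.card * 2 ^ k)) ∧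
      (∀ k ξ, |U k ξ| ≤ 4 * V * (2 ^ (-(1 / r)) : ℝ) ^ k) ∧
      (∀ K ξ, |∑ v ∈ Y, m v ξ - ∑ k ∈ Finset.range (K + 1), U k ξ|
        ≤ V * (2 ^ (-(1 / r)) : ℝ) ^ K) := by
  have hr0 : 0 < r := by linarith
  set ρ : ℝ := 2 ^ (-(1 / r)) with hρ
  have hρ0 : 0 < ρ := by positivity
  have hρ1 : 1 / 2 ≤ ρ := by
    rw [hρ, one_div, ← Real.rpow_neg_one]
    apply Real.rpow_le_rpow_of_exponent_le (by norm_num)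
    rw [neg_le_neg_iff, div_le_one hr0]; exact hr
  choose! s A h1 h2 h3 h4 h5 h6 using fun v (h : v ∈ Y) =>
    vdecomp r hr (m v) V hV (hm v h) v (hv v h).1 (hv v h).2 (hs v h)
  set S : ℕ → ℝ → ℝ := fun k ξ => ∑ v ∈ Y, s v k ξ with hS
  have hSm : ∀ k, Measurable (S k) := fun k =>
    Finset.measurable_fun_sum _ fun v hv => h1 v hv k
  have hSerr : ∀ k ξ, |∑ v ∈ Y, m v ξ - S k ξ| ≤ V * ρ ^ k := by
    intro k ξ
    simp only [hS]
    rw [← Finset.sum_sub_distrib]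
    refine disj_sum Y hY (fun v => m v ξ - s v k ξ) ξ _ (by positivity) ?_
      (fun v hv => h5 v hv k ξ)
    intro v hv hξ
    rw [h3 v hv k ξ hξ, sub_zero]
    by_contra h; exact hξ (hs v hv ξ h)
  have hSb : ∀ k ξ, |S k ξ| ≤ V := by
    intro k ξ
    exact disj_sum Y hY (fun v => s v k ξ) ξ _ hV.le (fun v hv hξ => h3 v hv k ξ hξ)
      (fun v hv => h4 v hv k ξ)
  set U : ℕ → ℝ → ℝ := fun k ξ => if k = 0 then S 0 ξ else S k ξ - S (k - 1) ξ with hU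
  have htel : ∀ K ξ, ∑ k ∈ Finset.range (K + 1), U k ξ = S K ξ := by
    intro K ξ
    induction K with
    | zero => simp [hU]
    | succ K ih => rw [Finset.sum_range_succ, ih]; simp [hU]
  refine ⟨U, ?_, ?_, ?_, ?_⟩
  · intro k
    by_cases hk : k = 0
    · have : U k = S 0 := by funext ξ; simp [hU, hk]
      rw [this]; exact hSm 0
    · have : U k = fun ξ => S k ξ - S (k - 1) ξ := by funext ξ; simp [hU, hk]
      rw [this]; exact (hSm k).sub (hSm _)
  · intro k
    refine ⟨Y.biUnion fun v => (Finset.range (2 ^ k + 1)).biUnion fun z =>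
      {sInf (A v k z), sSup (A v k z)}, ?_, ?_⟩
    · refine Finset.card_biUnion_le.trans ?_
      have : ∀ v ∈ Y, ((Finset.range (2 ^ k + 1)).biUnion fun z =>
          ({sInf (A v k z), sSup (A v k z)} : Finset ℝ)).card ≤ 4 * 2 ^ k := by
        intro v _
        refine Finset.card_biUnion_le.trans ?_
        refine (Finset.sum_le_card_nsmul _ _ 2 fun z _ => Finset.card_le_two).trans ?_
        rw [Finset.card_range, smul_eq_mul]
        have : 1 ≤ 2 ^ k := Nat.one_le_two_pow
        omega
      refine (Finset.sum_le_card_nsmul _ _ _ this).trans ?_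
      rw [smul_eq_mul]
      exact le_of_eq (by ring)
    · intro x y hxy hz
      have hmem : ∀ v ∈ Y, ∀ z ∈ Finset.range (2 ^ k + 1), x ∈ A v k z ↔ y ∈ A v k z := by
        intro v hv z hzr
        refine ord_break _ (h2 v hv k z) x y hxy (hz _ ?_) (hz _ ?_)
        · exact Finset.mem_biUnion.2 ⟨v, hv, Finset.mem_biUnion.2 ⟨z, hzr, by simp⟩⟩
        · exact Finset.mem_biUnion.2 ⟨v, hv, Finset.mem_biUnion.2 ⟨z, hzr, by simp⟩⟩
      have hSe : ∀ k' ≤ k, S k' x = S k' y := fun k' hk' =>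
        Finset.sum_congr rfl fun v hv => h6 v hv k' k hk' x y (hmem v hv)
      simp only [hU]
      rw [hSe 0 (by omega), hSe k le_rfl, hSe (k - 1) (by omega)]
  · intro k ξ
    by_cases hk : k = 0
    · simp only [hU, hk, if_true, pow_zero, mul_one]
      linarith [hSb 0 ξ]
    · simp only [hU, if_neg hk]
      obtain ⟨j, rfl⟩ : ∃ j, k = j + 1 := ⟨k - 1, by omega⟩
      simp only [Nat.add_sub_cancel]
      have e1 := hSerr (j + 1) ξ
      have e2 := hSerr j ξ
      rw [abs_le] at e1 e2 ⊢
      have hj : 0 < V * ρ ^ j := by positivity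
      have e3 : V * ρ ^ j ≤ 2 * (V * ρ ^ (j + 1)) := by rw [pow_succ]; nlinarith
      constructor <;> linarith [e1.1, e1.2, e2.1, e2.2]
  · intro K ξ
    rw [htel]; exact hSerr K ξ

/-! ### Part E: the Walsh kernel -/

lemma digit_eq_zero {x : ℝ} {p n : ℤ} (hx : 0 ≤ x) (hxp : x < 2 ^ p) (hpn : p ≤ n) :
    digit n x = 0 := by
  have h2 : (2 : ℝ) ^ p ≤ 2 ^ n := zpow_le_zpow_right₀ (by norm_num) hpn
  have h3 : (0 : ℝ) < 2 ^ n := by positivity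
  have : ⌊x / 2 ^ n⌋ = 0 := by
    rw [Int.floor_eq_zero_iff]
    refine ⟨by positivity, ?_⟩
    rw [div_lt_one h3]; linarith
  rw [digit, this]; rfl

lemma digit_01 (n : ℤ) (x : ℝ) : digit n x = 0 ∨ digit n x = 1 := by
  unfold digit; omega

lemma digit_bit (n t : ℕ) {x : ℝ} (hx : 0 ≤ x) :
    digit ((t : ℤ) - n) x = if (⌊x * 2 ^ n⌋₊).testBit t = true then 1 else 0 := by
  have h1 : x / 2 ^ ((t : ℤ) - n) = (x * 2 ^ n) / ((2 ^ t : ℕ) : ℝ) := by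
    rw [zpow_sub₀ (by norm_num)]; push_cast; field_simp
    norm_cast; ring
  have h2 : ⌊x / 2 ^ ((t : ℤ) - n)⌋ = ((⌊x * 2 ^ n⌋₊ / 2 ^ t : ℕ) : ℤ) := by
    rw [h1, ← Nat.floor_div_natCast, Int.natCast_floor_eq_floor (by positivity)]
  rw [digit, h2, Nat.testBit_eq_decide_div_mod_eq]
  simp only [decide_eq_true_eq]
  split_ifs with h <;> omega

lemma wMulDigit_eq (n : ℤ) (x y : ℝ) (F : Finset ℤ)
    (h : ∀ m ∉ F, digit (n - m) x * digit m y = 0) :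
    wMulDigit n x y = (∑ m ∈ F, digit (n - m) x * digit m y) % 2 := by
  rw [wMulDigit, tsum_eq_sum (s := F), ← Int.cast_sum, Int.floor_intCast]
  intro m hm
  rw [h m hm]; simp

lemma wMulDigit_01 (n : ℤ) (x y : ℝ) : wMulDigit n x y = 0 ∨ wMulDigit n x y = 1 := by
  unfold wMulDigit; omega

lemma neg_one_zpow_mod (s : ℤ) : (-1 : ℝ) ^ (s % 2) = (-1 : ℝ) ^ s := by
  conv_rhs => rw [← Int.emod_add_mul_ediv s 2, zpow_add₀ (by norm_num), zpow_mul]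
  simp

lemma neg_one_zpow_sum {ι : Type*} (s : Finset ι) (f : ι → ℤ) :
    (-1 : ℝ) ^ (∑ i ∈ s, f i) = ∏ i ∈ s, (-1 : ℝ) ^ f i := by
  induction s using Finset.induction_on with
  | empty => simp
  | insert a s ha ih => rw [Finset.sum_insert ha, Finset.prod_insert ha, zpow_add₀ (by norm_num), ih]

/-- The Walsh kernel. -/
def kk (ξ x : ℝ) : ℝ := (-1 : ℝ) ^ (wMulDigit (-1) ξ x)

lemma kk_box (n j : ℕ) {ξ x : ℝ} (h0 : 0 ≤ ξ) (h1 : ξ < 2 ^ n) (h2 : 0 ≤ x) (h3 : x < 2 ^ j) :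
    kk ξ x = WW (n + j) ⌊x * 2 ^ n⌋₊ ⌊ξ * 2 ^ j⌋₊ := by
  rw [kk, wMulDigit_eq (-1) ξ x ((Finset.range (n + j)).image fun t : ℕ => (t : ℤ) - n),
    neg_one_zpow_mod, neg_one_zpow_sum, Finset.prod_image, WW]
  · refine Finset.prod_congr rfl fun t ht => ?_
    have ht' := Finset.mem_range.1 ht
    have h4 : (-1 : ℤ) - ((t : ℤ) - n) = ((n + j - 1 - t : ℕ) : ℤ) - j := by omega
    rw [h4, digit_bit j _ h0, digit_bit n _ h2]
    by_cases ha : (⌊x * 2 ^ n⌋₊).testBit t = true <;>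
      by_cases hb : (⌊ξ * 2 ^ j⌋₊).testBit (n + j - 1 - t) = true <;> simp [ha, hb]
  · intro a _ b _ h; simpa using h
  · intro m hm
    simp only [Finset.mem_image, Finset.mem_range, not_exists, not_and] at hm
    by_cases hmj : (j : ℤ) ≤ m
    · rw [digit_eq_zero (p := j) h2 (by exact_mod_cast h3) hmj, mul_zero]
    · by_cases hmn : m < -n
      · rw [digit_eq_zero (p := n) (n := -1 - m) h0 (by exact_mod_cast h1) (by omega), zero_mul]
      · exact absurd (by omega) (hm (m + n).toNat (by omega))

lemma exists_pow_gt (x : ℝ) : ∃ n : ℕ, x < 2 ^ n := pow_unbounded_of_one_lt x (by norm_num)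

lemma kk_box' {n : ℕ} {ξ x : ℝ} (h0 : 0 ≤ ξ) (h1 : ξ < 2 ^ n) (h2 : 0 ≤ x) (h3 : x < 2 ^ n) :
    kk ξ x = WW (n + n) ⌊x * 2 ^ n⌋₊ ⌊ξ * 2 ^ n⌋₊ := kk_box n n h0 h1 h2 h3

lemma exists_pow_gt2 (x y : ℝ) : ∃ n : ℕ, x < 2 ^ n ∧ y < 2 ^ n := by
  obtain ⟨n, hn⟩ := exists_pow_gt (max x y)
  exact ⟨n, (le_max_left _ _).trans_lt hn, (le_max_right _ _).trans_lt hn⟩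

lemma kk_symm {ξ x : ℝ} (h0 : 0 ≤ ξ) (h2 : 0 ≤ x) : kk ξ x = kk x ξ := by
  obtain ⟨n, h1, h3⟩ := exists_pow_gt2 ξ x
  rw [kk_box' h0 h1 h2 h3, kk_box' h2 h3 h0 h1, WW_symm]

lemma kk_abs (ξ x : ℝ) : |kk ξ x| = 1 := by
  rw [kk]; rcases wMulDigit_01 (-1) ξ x with h | h <;> rw [h] <;> simp

lemma bin_floor (c : ℤ → ℤ) (hc : ∀ n, c n = 0 ∨ c n = 1) (N : ℕ) (hN : ∀ n : ℤ, N ≤ n → c n = 0)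
    (k : ℕ) (hk : c (-2 - k) = 0) :
    digit (-1) (∑' n : ℤ, (c n : ℝ) * 2 ^ n) = c (-1) := by
  have hc1 : ∀ n, (c n : ℝ) ≤ 1 := fun n => by rcases hc n with h | h <;> simp [h]
  have hc0 : ∀ n, (0 : ℝ) ≤ c n := fun n => by rcases hc n with h | h <;> simp [h]
  set f : ℤ → ℝ := fun i => (c (i - 1) : ℝ) * 2 ^ i with hf
  have hpos : HasSum (fun n : ℕ => f n) (∑ n ∈ Finset.range (N + 1), f n) := by
    apply hasSum_sum_of_ne_finset_zero
    intro n hn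
    simp only [Finset.mem_range, not_lt] at hn
    simp only [hf]
    rw [hN _ (by omega)]; simp
  have hgeo : HasSum (fun n : ℕ => (1 / 2 : ℝ) / 2 / 2 ^ n * 2) 1 := by
    have := (hasSum_geometric_two' (1 / 2 : ℝ)).mul_right 2
    simpa using this
  have hg2 : ∀ n : ℕ, (1 / 2 : ℝ) / 2 / 2 ^ n * 2 = (2 : ℝ) ^ (-((n : ℤ) + 1)) := by
    intro n
    rw [zpow_neg, zpow_add₀ (by norm_num)]; field_simp; norm_num
  simp only [hg2] at hgeo
  have hle : ∀ n : ℕ, f (-((n : ℤ) + 1)) ≤ 2 ^ (-((n : ℤ) + 1)) := by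
    intro n
    have : (0 : ℝ) < 2 ^ (-((n : ℤ) + 1)) := by positivity
    simp only [hf]
    nlinarith [hc1 (-((n : ℤ) + 1) - 1)]
  have hnn : ∀ n : ℕ, 0 ≤ f (-((n : ℤ) + 1)) := by
    intro n
    exact mul_nonneg (hc0 _) (by positivity)
  have hsumm : Summable fun n : ℕ => f (-((n : ℤ) + 1)) :=
    Summable.of_nonneg_of_le hnn hle hgeo.summable
  have hlt : ∑' n : ℕ, f (-((n : ℤ) + 1)) < 1 := by
    rw [← hgeo.tsum_eq]
    refine Summable.tsum_lt_tsum (i := k) hle ?_ hsumm hgeo.summable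
    have : -((k : ℤ) + 1) - 1 = -2 - k := by ring
    simp only [hf]
    rw [this, hk]; simp; positivity
  have htot := (HasSum.of_nat_of_neg_add_one hpos hsumm.hasSum)
  have hshift : ∑' n : ℤ, (c n : ℝ) * 2 ^ n = (∑' n, f n) / 2 := by
    rw [← tsum_div_const, ← (Equiv.addRight (1 : ℤ)).tsum_eq (fun n => f n / 2)]
    refine tsum_congr fun n => ?_
    simp only [hf, Equiv.coe_addRight, add_sub_cancel_right]
    rw [zpow_add₀ (by norm_num)]; ring
  have hinteg : ∑ n ∈ Finset.range (N + 1), f n =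
      ((∑ n ∈ Finset.range (N + 1), c ((n : ℤ) - 1) * 2 ^ n : ℤ) : ℝ) := by
    push_cast; simp [hf]
  rw [digit, hshift, htot.tsum_eq, hinteg]
  have : ∀ z w : ℝ, (z + w) / 2 / 2 ^ (-1 : ℤ) = z + w := fun z w => by
    rw [zpow_neg_one]; field_simp
  rw [this, Int.floor_intCast_add, Int.floor_eq_zero_iff.2 ⟨tsum_nonneg hnn, hlt⟩,
    Finset.sum_range_succ']
  have hdvd : (2 : ℤ) ∣ ∑ n ∈ Finset.range N, c (((n + 1 : ℕ) : ℤ) - 1) * 2 ^ (n + 1) :=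
    Finset.dvd_sum fun n _ => ⟨c (((n + 1 : ℕ) : ℤ) - 1) * 2 ^ n, by ring⟩
  have hm1 : (((0 : ℕ) : ℤ) - 1) = -1 := by norm_num
  rw [hm1, pow_zero]
  have := hc (-1)
  omega

lemma wMulDigit_zero {a n : ℤ} {ξ x : ℝ} (h0 : 0 ≤ ξ) (h1 : ξ < 2 ^ a) (h2 : 0 ≤ x)
    (h3 : x < 2 ^ a) (hn : 2 * a ≤ n) : wMulDigit n ξ x = 0 := by
  rw [wMulDigit_eq n ξ x ∅]
  · simp
  · intro m _
    by_cases hm : a ≤ m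
    · rw [digit_eq_zero h2 h3 hm, mul_zero]
    · rw [digit_eq_zero h0 h1 (by omega), zero_mul]

lemma walshe_eq {ξ x : ℝ} (h0 : 0 ≤ ξ) (h2 : 0 ≤ x)
    (h : ¬ ∀ n : ℤ, n < -1 → wMulDigit n ξ x = 1) : walshe (wMul ξ x) = kk ξ x := by
  push Not at h
  obtain ⟨n, hn, hne⟩ := h
  obtain ⟨N, h1, h3⟩ := exists_pow_gt2 ξ x
  rw [walshe, kk, wMul, bin_floor _ (fun n => wMulDigit_01 n ξ x) (2 * N) ?_ (-2 - n).toNat ?_]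
  · intro n hn
    exact wMulDigit_zero (a := N) h0 (by exact_mod_cast h1) h2 (by exact_mod_cast h3)
      (by exact_mod_cast hn)
  · have : -2 - (((-2 - n).toNat : ℕ) : ℤ) = n := by omega
    rw [this]
    exact (wMulDigit_01 n ξ x).resolve_right hne

lemma floor_step (x : ℝ) (p : ℤ) : ⌊x / 2 ^ p⌋ = 2 * ⌊x / 2 ^ (p + 1)⌋ + digit p x := by
  have h1 : x / 2 ^ (p + 1) = x / 2 ^ p / ((2 : ℕ) : ℝ) := by
    rw [zpow_add₀ (by norm_num)]; push_cast; field_simp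
  have h2 : ⌊x / 2 ^ (p + 1)⌋ = ⌊x / 2 ^ p⌋ / 2 := by
    rw [h1, Int.floor_div_natCast]; rfl
  rw [digit, h2]; omega

lemma floor_agree {x y : ℝ} {p : ℤ} (h : ⌊x / 2 ^ p⌋ = ⌊y / 2 ^ p⌋) (d : ℕ) :
    ⌊x / 2 ^ (p + d)⌋ = ⌊y / 2 ^ (p + d)⌋ := by
  induction d with
  | zero => simpa using h
  | succ d ih =>
    have hx := floor_step x (p + d)
    have hy := floor_step y (p + d)
    rw [ih] at hx
    have e : p + ((d + 1 : ℕ) : ℤ) = p + d + 1 := by push_cast; ring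
    have a1 := digit_01 (p + d) x
    have a2 := digit_01 (p + d) y
    rw [e]; omega

lemma exc_countable {ξ : ℝ} (hξ : 0 < ξ) :
    {x : ℝ | 0 ≤ x ∧ ∀ n : ℤ, n < -1 → wMulDigit n ξ x = 1}.Countable := by
  obtain ⟨K, hK1, hK2⟩ := exists_mem_Ico_zpow hξ (one_lt_two (α := ℝ))
  have hdK : digit K ξ = 1 := by
    have h3 : (0 : ℝ) < 2 ^ K := by positivity
    have : ⌊ξ / 2 ^ K⌋ = 1 := by
      rw [Int.floor_eq_iff]
      constructor
      · rw [le_div_iff₀ h3]; simpa using hK1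
      · rw [div_lt_iff₀ h3]
        rw [zpow_add₀ (by norm_num)] at hK2
        push_cast; linarith [hK2]
    rw [digit, this]; rfl
  refine MapsTo.countable_of_injOn (f := fun x => ⌊x / 2 ^ (-1 - K)⌋) (t := univ)
    (fun _ _ => mem_univ _) ?_ (countable_univ)
  rintro x ⟨hx0, hx⟩ y ⟨hy0, hy⟩ hxy
  simp only at hxy
  have key : ∀ d : ℕ, ⌊x / 2 ^ (-1 - K - d)⌋ = ⌊y / 2 ^ (-1 - K - d)⌋ := by
    intro d
    induction d with
    | zero => simpa using hxy
    | succ d ih =>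
      set p : ℤ := -1 - K - ((d + 1 : ℕ) : ℤ) with hp
      have e : -1 - K - (d : ℤ) = p + 1 := by rw [hp]; push_cast; ring
      rw [e] at ih
      have hdig : ∀ m, p < m → digit m x = digit m y := by
        intro m hm
        have := floor_agree ih (m - (p + 1)).toNat
        have e2 : p + 1 + ((m - (p + 1)).toNat : ℤ) = m := by omega
        rw [e2] at this
        rw [digit, digit, this]
      obtain ⟨N, hN1, hN2⟩ := exists_pow_gt2 x y
      have hform : ∀ z : ℝ, 0 ≤ z → z < 2 ^ N → wMulDigit (p + K) ξ z =
          (digit p z + ∑ m ∈ Finset.Ioo p N, digit (p + K - m) ξ * digit m z) % 2 := by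
        intro z hz0 hz
        rw [wMulDigit_eq (p + K) ξ z (insert p (Finset.Ioo p N)), Finset.sum_insert (by simp)]
        · rw [show p + K - p = K by ring, hdK, one_mul]
        · intro m hm
          simp only [Finset.mem_insert, Finset.mem_Ioo, not_or, not_and, not_lt] at hm
          by_cases hmN : (N : ℤ) ≤ m
          · rw [digit_eq_zero (p := N) hz0 (by exact_mod_cast hz) hmN, mul_zero]
          · rw [digit_eq_zero hξ.le hK2 (by omega), zero_mul]
      have h1 := hx (p + K) (by omega)
      have h2 := hy (p + K) (by omega)
      rw [hform x hx0 hN1] at h1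
      rw [hform y hy0 hN2] at h2
      have h3 : ∑ m ∈ Finset.Ioo p N, digit (p + K - m) ξ * digit m x =
          ∑ m ∈ Finset.Ioo p N, digit (p + K - m) ξ * digit m y :=
        Finset.sum_congr rfl fun m hm => by rw [hdig m (Finset.mem_Ioo.1 hm).1]
      have hx' := floor_step x p
      have hy' := floor_step y p
      have a1 := digit_01 p x
      have a2 := digit_01 p y
      rw [h3] at h1
      omega
  by_contra hne
  have hpos : 0 < |x - y| := abs_pos.2 (sub_ne_zero.2 hne)
  obtain ⟨n, hn⟩ := exists_pow_lt_of_lt_one (show (0 : ℝ) < |x - y| / 2 ^ (-1 - K) by positivity)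
    (show (1 / 2 : ℝ) < 1 by norm_num)
  have h3 : (0 : ℝ) < 2 ^ (-1 - K - (n : ℤ)) := by positivity
  have := Int.abs_sub_lt_one_of_floor_eq_floor (key n)
  rw [← sub_div, abs_div, abs_of_pos h3, div_lt_one h3] at this
  rw [lt_div_iff₀ (by positivity)] at hn
  rw [zpow_sub₀ (by norm_num), zpow_natCast] at this
  rw [one_div, inv_pow] at hn
  rw [div_eq_mul_inv] at this
  linarith

lemma walshFT_eq (f : ℝ → ℝ) {ξ : ℝ} (hξ : 0 < ξ) :
    walshFT f ξ = ∫ x, kk ξ x * f x ∂μplus := by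
  rw [walshFT, μplus]
  apply integral_congr_ae
  have h1 := (exc_countable hξ).ae_notMem (volume.restrict (Ici (0 : ℝ)))
  filter_upwards [h1, ae_restrict_mem measurableSet_Ici] with x hx hx0
  rw [walshe_eq hξ.le hx0]
  intro h
  exact hx ⟨hx0, h⟩

/-! ### Part G: the kernel as a measurable function, discretisation -/

/-- The kernel extended by zero. -/
def kap (ξ x : ℝ) : ℝ := if 0 ≤ ξ ∧ 0 ≤ x then kk ξ x else 0

lemma kap_symm (ξ x : ℝ) : kap ξ x = kap x ξ := by
  unfold kap
  by_cases h : 0 ≤ ξ ∧ 0 ≤ x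
  · rw [if_pos h, if_pos h.symm, kk_symm h.1 h.2]
  · rw [if_neg h, if_neg (fun h' => h h'.symm)]

lemma kap_abs_le (ξ x : ℝ) : |kap ξ x| ≤ 1 := by
  unfold kap
  split_ifs
  · rw [kk_abs]
  · simp

lemma pair_meas (n : ℕ) (w : ℕ × ℕ → ℝ) :
    Measurable fun p : ℝ × ℝ => w (⌊p.2 * 2 ^ n⌋₊, ⌊p.1 * 2 ^ n⌋₊) := by
  have h1 : Measurable fun p : ℝ × ℝ => (⌊p.2 * 2 ^ n⌋₊, ⌊p.1 * 2 ^ n⌋₊) :=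
    (Nat.measurable_floor.comp (measurable_snd.mul_const _)).prodMk
      (Nat.measurable_floor.comp (measurable_fst.mul_const _))
  have h2 : Measurable w := Measurable.of_discrete
  exact h2.comp h1

lemma kap_meas : Measurable (Function.uncurry kap) := by
  let K : ℕ → ℝ × ℝ → ℝ := fun n p =>
    if 0 ≤ p.1 ∧ 0 ≤ p.2 then WW (n + n) ⌊p.2 * 2 ^ n⌋₊ ⌊p.1 * 2 ^ n⌋₊ else 0
  have hK : ∀ n, Measurable (K n) := by
    intro n
    refine Measurable.ite ?_ ?_ measurable_const
    · exact (measurableSet_le measurable_const measurable_fst).inter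
        (measurableSet_le measurable_const measurable_snd)
    · exact pair_meas n (fun q => WW (n + n) q.1 q.2)
  refine measurable_of_tendsto_metrizable hK ?_
  rw [tendsto_pi_nhds]
  rintro ⟨ξ, x⟩
  apply tendsto_const_nhds.congr'
  obtain ⟨n, h1, h3⟩ := exists_pow_gt2 ξ x
  filter_upwards [eventually_ge_atTop n] with k hk
  simp only [Function.uncurry, kap, K]
  have h4 : (2 : ℝ) ^ n ≤ 2 ^ k := pow_le_pow_right₀ (by norm_num) hk
  split_ifs with h
  · rw [kk_box' h.1 (h1.trans_le h4) h.2 (h3.trans_le h4)]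
  · rfl

lemma kap_meas1 (ξ : ℝ) : Measurable (kap ξ) := kap_meas.comp measurable_prodMk_left

/-- The transform with the measurable kernel. -/
def WT (f : ℝ → ℝ) (ξ : ℝ) : ℝ := ∫ x, kap ξ x * f x ∂μplus

lemma walshFT_eq_WT (f : ℝ → ℝ) {ξ : ℝ} (hξ : 0 < ξ) : walshFT f ξ = WT f ξ := by
  rw [walshFT_eq f hξ, WT]
  apply integral_congr_ae
  rw [μplus]
  filter_upwards [ae_restrict_mem measurableSet_Ici] with x hx
  rw [kap, if_pos ⟨hξ.le, hx⟩]

lemma ae_pos : ∀ᵐ ξ ∂μplus, 0 < ξ := by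
  rw [μplus]
  have h : ∀ᵐ ξ ∂(volume.restrict (Ici (0 : ℝ))), ξ ∉ ({0} : Set ℝ) :=
    (countable_singleton (0 : ℝ)).ae_notMem _
  filter_upwards [h, ae_restrict_mem measurableSet_Ici] with x hx hx0
  exact lt_of_le_of_ne hx0 (fun h => hx h.symm)

lemma walshFT_ae (f : ℝ → ℝ) : walshFT f =ᵐ[μplus] WT f := by
  filter_upwards [ae_pos] with ξ hξ using walshFT_eq_WT f hξ

instance : SigmaFinite μplus := by unfold μplus; infer_instance

lemma kap_mul_int {f : ℝ → ℝ} (hf : Integrable f μplus) (ξ : ℝ) :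
    Integrable (fun x => kap ξ x * f x) μplus := by
  refine Integrable.bdd_mul (c := 1) hf (kap_meas1 ξ).aestronglyMeasurable ?_
  exact Eventually.of_forall fun x => by rw [Real.norm_eq_abs]; exact kap_abs_le ξ x

lemma WT_bound {f : ℝ → ℝ} (hf : Integrable f μplus) (ξ : ℝ) :
    |WT f ξ| ≤ ∫ x, |f x| ∂μplus := by
  rw [WT, ← Real.norm_eq_abs]
  refine (norm_integral_le_integral_norm _).trans ?_
  refine integral_mono (kap_mul_int hf ξ).norm hf.abs fun x => ?_
  simp only [norm_mul, Real.norm_eq_abs]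
  nlinarith [kap_abs_le ξ x, abs_nonneg (f x)]

lemma WT_not_int {f : ℝ → ℝ} (hf : ¬ Integrable f μplus) {ξ : ℝ} (hξ : 0 ≤ ξ) : WT f ξ = 0 := by
  rw [WT]
  apply integral_undef
  intro h
  apply hf
  have h2 : Integrable (fun x => kap ξ x * (kap ξ x * f x)) μplus := by
    refine Integrable.bdd_mul (c := 1) h (kap_meas1 ξ).aestronglyMeasurable ?_
    exact Eventually.of_forall fun x => by rw [Real.norm_eq_abs]; exact kap_abs_le ξ x
  refine h2.congr ?_
  filter_upwards [ae_pos] with x hx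
  rw [kap, if_pos ⟨hξ, hx.le⟩, ← mul_assoc, ← abs_mul_abs_self, kk_abs]; simp

lemma kap_prod_int {f h : ℝ → ℝ} (hf : Integrable f μplus) (hh : Integrable h μplus) :
    Integrable (fun p : ℝ × ℝ => kap p.1 p.2 * (h p.1 * f p.2)) (μplus.prod μplus) := by
  refine Integrable.bdd_mul (c := 1) (hh.mul_prod hf) kap_meas.aestronglyMeasurable ?_
  exact Eventually.of_forall fun x => by rw [Real.norm_eq_abs]; exact kap_abs_le _ _

lemma WT_meas {f : ℝ → ℝ} (hf : Integrable f μplus) : AEStronglyMeasurable (WT f) μplus := by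
  have h2 : AEStronglyMeasurable (fun p : ℝ × ℝ => kap p.1 p.2 * f p.2) (μplus.prod μplus) :=
    (kap_meas.aestronglyMeasurable).mul hf.1.comp_snd
  exact h2.integral_prod_right'

lemma WT_fubini {f h : ℝ → ℝ} (hf : Integrable f μplus) (hh : Integrable h μplus) :
    ∫ ξ, WT f ξ * h ξ ∂μplus = ∫ x, f x * WT h x ∂μplus := by
  have h1 := integral_integral_swap (f := fun ξ x => kap ξ x * (h ξ * f x))
    (kap_prod_int hf hh)
  calc ∫ ξ, WT f ξ * h ξ ∂μplus = ∫ ξ, ∫ x, kap ξ x * (h ξ * f x) ∂μplus ∂μplus := by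
        congr 1; ext ξ; rw [WT, ← integral_mul_const]; congr 1; ext x; ring
    _ = ∫ x, ∫ ξ, kap ξ x * (h ξ * f x) ∂μplus ∂μplus := h1
    _ = _ := by
        congr 1; ext x; rw [WT, ← integral_const_mul]; congr 1; ext ξ; rw [kap_symm]; ring

/-- dyadic cells -/
def cell (s a : ℕ) : Set ℝ := Ico ((a : ℝ) / 2 ^ s) (((a : ℝ) + 1) / 2 ^ s)

lemma cell_meas (s a : ℕ) : MeasurableSet (cell s a) := measurableSet_Ico

lemma cell_vol (s a : ℕ) : volume.real (cell s a) = 1 / 2 ^ s := by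
  rw [cell, Measure.real, Real.volume_Ico, ENNReal.toReal_ofReal] <;> [ring; skip]
  rw [← sub_div]; simp

lemma cell_floor {s a : ℕ} {x : ℝ} (hx : x ∈ cell s a) : ⌊x * 2 ^ s⌋₊ = a := by
  have h2 : (0 : ℝ) < 2 ^ s := by positivity
  obtain ⟨h, h'⟩ := hx
  rw [div_le_iff₀ h2] at h
  rw [lt_div_iff₀ h2] at h'
  rw [Nat.floor_eq_iff (le_trans (by positivity) h)]
  exact ⟨h, h'⟩

lemma cell_sub (s a N : ℕ) (h : a < N) : cell s a ⊆ Ico 0 ((N : ℝ) / 2 ^ s) := by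
  have h2 : (0 : ℝ) < 2 ^ s := by positivity
  rintro x ⟨h1, h3⟩
  refine ⟨le_trans (by positivity) h1, h3.trans_le ?_⟩
  gcongr; exact_mod_cast h

lemma cells_sum (s N : ℕ) (F : ℝ → ℝ) (hF : IntegrableOn F (Ico 0 ((N : ℝ) / 2 ^ s))) :
    ∫ x in Ico 0 ((N : ℝ) / 2 ^ s), F x = ∑ a ∈ Finset.range N, ∫ x in cell s a, F x := by
  induction N with
  | zero => simp
  | succ N ih =>
    have h2 : (0 : ℝ) < 2 ^ s := by positivity
    have hle : (N : ℝ) / 2 ^ s ≤ ((N : ℝ) + 1) / 2 ^ s := by gcongr; linarith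
    have hu : Ico 0 (((N + 1 : ℕ) : ℝ) / 2 ^ s) = Ico 0 ((N : ℝ) / 2 ^ s) ∪ cell s N := by
      rw [cell, Ico_union_Ico_eq_Ico (by positivity) hle]; push_cast; rfl
    rw [hu] at hF ⊢
    rw [setIntegral_union _ (cell_meas s N) (hF.mono_set subset_union_left)
      (hF.mono_set subset_union_right), ih (hF.mono_set subset_union_left),
      Finset.sum_range_succ]
    rw [cell]
    exact Ico_disjoint_Ico_same

lemma restrict_plus {S : Set ℝ} (hS : MeasurableSet S) (h : S ⊆ Ici 0) :
    μplus.restrict S = volume.restrict S := by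
  rw [μplus, Measure.restrict_restrict hS, inter_eq_left.2 h]

lemma int_on {g : ℝ → ℝ} (hg : Integrable g μplus) {S : Set ℝ} (hS : MeasurableSet S)
    (h : S ⊆ Ici 0) : IntegrableOn g S := by
  have := hg.restrict (s := S)
  rwa [restrict_plus hS h] at this

/-- truncation to `[0, 2^j)` -/
def trunc (j : ℕ) (g : ℝ → ℝ) : ℝ → ℝ := (Ico (0 : ℝ) (2 ^ j)).indicator g

lemma trunc_int {g : ℝ → ℝ} (hg : Integrable g μplus) (j : ℕ) : Integrable (trunc j g) μplus :=
  hg.indicator measurableSet_Ico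

lemma pow_div (n j : ℕ) : ((2 ^ (n + j) : ℕ) : ℝ) / 2 ^ n = 2 ^ j := by
  push_cast; rw [pow_add]; field_simp

lemma Ico_sub (a : ℝ) : Ico 0 a ⊆ Ici (0 : ℝ) := fun _ h => h.1

lemma WT_trunc {g : ℝ → ℝ} (hg : Integrable g μplus) (n j : ℕ) {ξ : ℝ} (h0 : 0 ≤ ξ)
    (h1 : ξ < 2 ^ n) :
    WT (trunc j g) ξ = ft (n + j) (fun a => ∫ x in cell n a, g x) ⌊ξ * 2 ^ j⌋₊ := by
  have e1 : WT (trunc j g) ξ = ∫ x in Ico (0 : ℝ) (2 ^ j), kap ξ x * g x := by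
    rw [WT, ← restrict_plus measurableSet_Ico (Ico_sub _), ← integral_indicator measurableSet_Ico]
    congr 1; ext x
    by_cases hx : x ∈ Ico (0 : ℝ) (2 ^ j) <;> simp only [trunc, indicator, hx, if_true, if_false,
      mul_zero]
  have hinteg := int_on (kap_mul_int hg ξ) measurableSet_Ico (Ico_sub (2 ^ j))
  rw [← pow_div n j] at e1 hinteg
  rw [e1, cells_sum _ _ _ hinteg, ft]
  refine Finset.sum_congr rfl fun a ha => ?_
  rw [← integral_const_mul]
  refine setIntegral_congr_fun (cell_meas n a) fun x hx => ?_
  have hx' := cell_sub n a _ (Finset.mem_range.1 ha) hx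
  rw [pow_div] at hx'
  simp only [kap]
  rw [if_pos ⟨h0, hx'.1⟩, kk_box n j h0 h1 hx'.1 hx'.2, cell_floor hx]

lemma bil_disc {g h u : ℝ → ℝ} (hg : Integrable g μplus) (hh : Integrable h μplus)
    (hu : Measurable u) (A : ℝ) (hA : ∀ x, |u x| ≤ A) (n j : ℕ) :
    ∫ ξ in Ico (0 : ℝ) (2 ^ n), u ξ * WT (trunc j g) ξ * WT (trunc j h) ξ =
      ∑ b ∈ Finset.range (2 ^ (n + j)), (∫ ξ in cell j b, u ξ) *
        ft (n + j) (fun a => ∫ x in cell n a, g x) b *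
        ft (n + j) (fun a => ∫ x in cell n a, h x) b := by
  have e : ((2 ^ (n + j) : ℕ) : ℝ) / 2 ^ j = 2 ^ n := by rw [add_comm, pow_div]
  have hm : ∀ {f : ℝ → ℝ}, Integrable f μplus →
      AEStronglyMeasurable (WT (trunc j f)) (volume.restrict (Ico 0 (2 ^ n))) := by
    intro f hf
    have := (WT_meas (trunc_int hf j)).restrict (s := Ico (0 : ℝ) (2 ^ n))
    rwa [restrict_plus measurableSet_Ico (Ico_sub _)] at this
  have hinteg : IntegrableOn (fun ξ => u ξ * WT (trunc j g) ξ * WT (trunc j h) ξ)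
      (Ico 0 (2 ^ n)) := by
    refine IntegrableOn.of_bound (by simp) ((hu.aestronglyMeasurable.mul (hm hg)).mul (hm hh))
      (A * (∫ x, |trunc j g x| ∂μplus) * ∫ x, |trunc j h x| ∂μplus) ?_
    refine Eventually.of_forall fun x => ?_
    rw [Real.norm_eq_abs, abs_mul, abs_mul]
    have hA0 : 0 ≤ A := (abs_nonneg _).trans (hA x)
    have h1 := WT_bound (trunc_int hg j) x
    have h2 := WT_bound (trunc_int hh j) x
    have h3 := hA x
    gcongr
  rw [← e] at hinteg ⊢
  rw [cells_sum _ _ _ hinteg]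
  refine Finset.sum_congr rfl fun b hb => ?_
  rw [← integral_mul_const, ← integral_mul_const]
  refine setIntegral_congr_fun (cell_meas j b) fun ξ hξ => ?_
  have hx' := cell_sub j b _ (Finset.mem_range.1 hb) hξ
  rw [e] at hx'
  rw [WT_trunc hg n j hx'.1 hx'.2, WT_trunc hh n j hx'.1 hx'.2, cell_floor hξ]

/-! ### Part H: the bilinear bound -/

/-- real valued `L^q` norm -/
def nq (q : ℝ) (g : ℝ → ℝ) : ℝ := (∫ x, |g x| ^ q ∂μplus) ^ (1 / q)

lemma nq_nonneg (q : ℝ) (g : ℝ → ℝ) : 0 ≤ nq q g := by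
  unfold nq
  have : 0 ≤ ∫ x, |g x| ^ q ∂μplus := integral_nonneg fun x => by positivity
  positivity

lemma memLp_int {q : ℝ} (hq : 0 < q) {g : ℝ → ℝ} (hg : MemLp g (ENNReal.ofReal q) μplus) :
    Integrable (fun x => |g x| ^ q) μplus := by
  have := hg.integrable_norm_rpow (by simpa using hq) ENNReal.ofReal_ne_top
  rw [ENNReal.toReal_ofReal hq.le] at this
  exact this

lemma cell_holder {q q' : ℝ} (hqq : q.HolderConjugate q') {g : ℝ → ℝ}
    (hg : MemLp g (ENNReal.ofReal q) μplus) (n a : ℕ) :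
    |∫ x in cell n a, g x| ≤ (∫ x in cell n a, |g x| ^ q) ^ (1 / q) * (1 / 2 ^ n) ^ (1 / q') := by
  have hsub : cell n a ⊆ Ici 0 := (cell_sub n a (a + 1) (by omega)).trans (Ico_sub _)
  have hg' : MemLp g (ENNReal.ofReal q) (volume.restrict (cell n a)) := by
    have := hg.restrict (cell n a)
    rwa [restrict_plus (cell_meas n a) hsub] at this
  have hfin : IsFiniteMeasure (volume.restrict (cell n a)) := by
    unfold cell; infer_instance
  have h1 : MemLp (fun _ : ℝ => (1 : ℝ)) (ENNReal.ofReal q') (volume.restrict (cell n a)) :=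
    memLp_const 1
  have h := integral_mul_norm_le_Lp_mul_Lq hqq hg' h1
  simp only [norm_one, mul_one, Real.one_rpow, integral_const, smul_eq_mul,
    Real.norm_eq_abs, measureReal_restrict_apply_univ, cell_vol] at h
  refine le_trans ?_ h
  rw [← Real.norm_eq_abs]
  exact (norm_integral_le_integral_norm _)

lemma cells_holder {q q' : ℝ} (hqq : q.HolderConjugate q') {g : ℝ → ℝ}
    (hg : MemLp g (ENNReal.ofReal q) μplus) (n j : ℕ) :
    (∑ a ∈ Finset.range (2 ^ (n + j)), |∫ x in cell n a, g x| ^ q) ^ (1 / q) ≤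
      nq q g * (1 / 2 ^ n) ^ (1 / q') := by
  have hq := hqq.pos
  have hinteg := memLp_int hq hg
  set D : ℝ := (1 / 2 ^ n) ^ (1 / q') with hD
  have hD0 : 0 ≤ D := by positivity
  have hX : ∀ a, 0 ≤ ∫ x in cell n a, |g x| ^ q := fun a => integral_nonneg fun x => by positivity
  have h1 : ∑ a ∈ Finset.range (2 ^ (n + j)), |∫ x in cell n a, g x| ^ q ≤
      (∫ x, |g x| ^ q ∂μplus) * D ^ q := by
    calc _ ≤ ∑ a ∈ Finset.range (2 ^ (n + j)), (∫ x in cell n a, |g x| ^ q) * D ^ q := by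
          refine Finset.sum_le_sum fun a _ => ?_
          have := Real.rpow_le_rpow (abs_nonneg _) (cell_holder hqq hg n a) hq.le
          rwa [Real.mul_rpow (Real.rpow_nonneg (hX a) _) hD0, ← Real.rpow_mul (hX a),
            one_div_mul_cancel hq.ne', Real.rpow_one] at this
      _ = (∫ x in Ico 0 (((2 ^ (n + j) : ℕ) : ℝ) / 2 ^ n), |g x| ^ q) * D ^ q := by
          rw [cells_sum _ _ _ (int_on hinteg measurableSet_Ico (Ico_sub _)), Finset.sum_mul]
      _ ≤ _ := by
          refine mul_le_mul_of_nonneg_right ?_ (by positivity)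
          rw [← restrict_plus measurableSet_Ico (Ico_sub _)]
          exact setIntegral_le_integral hinteg (Eventually.of_forall fun x => by positivity)
  have hI : 0 ≤ ∫ x, |g x| ^ q ∂μplus := integral_nonneg fun x => by positivity
  calc _ ≤ ((∫ x, |g x| ^ q ∂μplus) * D ^ q) ^ (1 / q) :=
        Real.rpow_le_rpow (Finset.sum_nonneg fun a _ => by positivity) h1 (by positivity)
    _ = _ := by
        rw [Real.mul_rpow hI (by positivity), ← Real.rpow_mul hD0, mul_one_div_cancel hq.ne',
          Real.rpow_one, nq]

lemma PCR_cell {u : ℝ → ℝ} {N : ℕ} (hu : PCR u N) (L j : ℕ) :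
    ∃ Ξ : Finset ℕ, Ξ.card ≤ N ∧ PC L (fun b => 2 ^ j * ∫ ξ in cell j b, u ξ) Ξ := by
  obtain ⟨Ξ, hc, h⟩ := hu
  refine ⟨Ξ.image fun z => ⌊z * 2 ^ j⌋₊, Finset.card_image_le.trans hc, ?_⟩
  intro x y hxy _ hz
  have h2 : (0 : ℝ) < 2 ^ j := by positivity
  have hconst : ∀ b, x ≤ b → b ≤ y → ∀ t ∈ cell j b, u t = u ((x : ℝ) / 2 ^ j) := by
    rintro b hb1 hb2 t ⟨ht1, ht2⟩
    have hle : (x : ℝ) / 2 ^ j ≤ (b : ℝ) / 2 ^ j := by gcongr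
    refine (h _ _ (hle.trans ht1) ?_).symm
    rintro z hzΞ ⟨hz1, hz2⟩
    refine hz _ (Finset.mem_image_of_mem _ hzΞ) ⟨?_, ?_⟩
    · rw [div_le_iff₀ h2] at hz1
      exact Nat.le_floor hz1
    · have h4 := hz2.trans_lt ht2
      rw [lt_div_iff₀ h2] at h4
      have h5 : ⌊z * 2 ^ j⌋₊ < b + 1 := by
        rw [Nat.floor_lt' (by omega)]; push_cast; exact h4
      omega
  have hinteg : ∀ b, x ≤ b → b ≤ y → ∫ ξ in cell j b, u ξ = 1 / 2 ^ j * u ((x : ℝ) / 2 ^ j) := by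
    intro b hb1 hb2
    rw [setIntegral_congr_fun (cell_meas j b) (hconst b hb1 hb2), setIntegral_const, cell_vol,
      smul_eq_mul]
  simp only
  rw [hinteg x le_rfl hxy, hinteg y hxy le_rfl]

lemma bil_U (q q' : ℝ) (hq1 : 1 < q) (hqq : q.HolderConjugate q') :
    ∃ C : ℝ, 0 < C ∧ ∀ (N : ℕ) (_ : 1 ≤ N) (u : ℝ → ℝ) (_ : Measurable u) (_ : PCR u N) (A : ℝ)
      (_ : 0 < A) (_ : ∀ x, |u x| ≤ A) (g h : ℝ → ℝ) (_ : Integrable g μplus)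
      (_ : Integrable h μplus) (_ : MemLp g (ENNReal.ofReal q) μplus)
      (_ : MemLp h (ENNReal.ofReal q') μplus) (n j : ℕ),
      |∫ ξ in Ico (0 : ℝ) (2 ^ n), u ξ * WT (trunc j g) ξ * WT (trunc j h) ξ| ≤
        C * (N : ℝ) ^ |1 / q - 1 / 2| * A * (nq q g * nq q' h) := by
  obtain ⟨C, hC, hfin⟩ := fin_bound q q' hq1 hqq
  refine ⟨C, hC, ?_⟩
  intro N hN u hu hpc A hA hb g h hg hh hgq hhq n j
  rw [bil_disc hg hh hu A hb n j]
  obtain ⟨Ξ, hc, hPC⟩ := PCR_cell hpc (n + j) j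
  have h2 : (0 : ℝ) < 2 ^ j := by positivity
  have hbd : ∀ b < 2 ^ (n + j), |2 ^ j * ∫ ξ in cell j b, u ξ| ≤ A := by
    intro b _
    have h3 := norm_setIntegral_le_of_norm_le_const (μ := volume) (s := cell j b) (C := A) (f := u)
      (by rw [cell]; simp) (fun x _ => hb x)
    rw [cell_vol, Real.norm_eq_abs] at h3
    rw [abs_mul, abs_of_pos h2]
    calc 2 ^ j * |∫ ξ in cell j b, u ξ| ≤ 2 ^ j * (A * (1 / 2 ^ j)) := by gcongr
      _ = A := by field_simp
  have key := hfin (n + j) N hN _ Ξ hc hPC A hA hbd (fun a => ∫ x in cell n a, g x)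
    (fun a => ∫ x in cell n a, h x)
  have e : ∑ b ∈ Finset.range (2 ^ (n + j)), (2 ^ j * ∫ ξ in cell j b, u ξ) *
        ft (n + j) (fun a => ∫ x in cell n a, g x) b *
        ft (n + j) (fun a => ∫ x in cell n a, h x) b =
      2 ^ j * ∑ b ∈ Finset.range (2 ^ (n + j)), (∫ ξ in cell j b, u ξ) *
        ft (n + j) (fun a => ∫ x in cell n a, g x) b *
        ft (n + j) (fun a => ∫ x in cell n a, h x) b := by
    rw [Finset.mul_sum]; refine Finset.sum_congr rfl fun b _ => ?_; ring
  rw [e, abs_mul, abs_of_pos h2] at key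
  have hg3 := cells_holder hqq hgq n j
  have hh3 := cells_holder hqq.symm hhq n j
  have hprod : ((1 : ℝ) / 2 ^ n) ^ (1 / q') * (1 / 2 ^ n) ^ (1 / q) = 1 / 2 ^ n := by
    rw [← Real.rpow_add (by positivity)]
    have := hqq.inv_add_inv_eq_one
    rw [one_div q, one_div q', add_comm, this, Real.rpow_one]
  have hq := hqq.pos
  have hN0 : (0 : ℝ) ≤ N := by positivity
  refine le_of_mul_le_mul_left ?_ h2
  refine key.trans ?_
  calc _ ≤ C * (N : ℝ) ^ |1 / q - 1 / 2| * A * 2 ^ (n + j) *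
        (nq q g * (1 / 2 ^ n) ^ (1 / q')) * (nq q' h * (1 / 2 ^ n) ^ (1 / q)) := by
        have := nq_nonneg q g
        gcongr
    _ = C * (N : ℝ) ^ |1 / q - 1 / 2| * A * 2 ^ (n + j) * (nq q g * nq q' h) *
        (((1 : ℝ) / 2 ^ n) ^ (1 / q') * (1 / 2 ^ n) ^ (1 / q)) := by ring
    _ = _ := by rw [hprod, pow_add]; field_simp

lemma WT_meas_Ico {f : ℝ → ℝ} (hf : Integrable f μplus) (a : ℝ) :
    AEStronglyMeasurable (WT f) (volume.restrict (Ico 0 a)) := by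
  have := (WT_meas hf).restrict (s := Ico (0 : ℝ) a)
  rwa [restrict_plus measurableSet_Ico (Ico_sub _)] at this

lemma uWW_int {g h u : ℝ → ℝ} (hg : Integrable g μplus) (hh : Integrable h μplus)
    (hu : Measurable u) (A : ℝ) (hA : ∀ x, |u x| ≤ A) (a : ℝ) :
    IntegrableOn (fun ξ => u ξ * WT g ξ * WT h ξ) (Ico 0 a) := by
  refine IntegrableOn.of_bound (by simp)
    ((hu.aestronglyMeasurable.mul (WT_meas_Ico hg a)).mul (WT_meas_Ico hh a))
    (A * (∫ x, |g x| ∂μplus) * ∫ x, |h x| ∂μplus) ?_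
  refine Eventually.of_forall fun x => ?_
  rw [Real.norm_eq_abs, abs_mul, abs_mul]
  have hA0 : 0 ≤ A := (abs_nonneg _).trans (hA x)
  have h1 := WT_bound hg x
  have h2 := WT_bound hh x
  have h3 := hA x
  gcongr

lemma uWW_bound {g h u : ℝ → ℝ} (hg : Integrable g μplus) (hh : Integrable h μplus)
    (A : ℝ) (hA : ∀ x, |u x| ≤ A) (n : ℕ) :
    |∫ ξ in Ico (0 : ℝ) (2 ^ n), u ξ * WT g ξ * WT h ξ| ≤
      A * ((∫ x, |g x| ∂μplus) * (∫ x, |h x| ∂μplus) * 2 ^ n) := by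
  have h3 := norm_setIntegral_le_of_norm_le_const (μ := volume) (s := Ico (0 : ℝ) (2 ^ n))
    (C := A * (∫ x, |g x| ∂μplus) * ∫ x, |h x| ∂μplus)
    (f := fun ξ => u ξ * WT g ξ * WT h ξ) (by simp) (fun x _ => by
      rw [Real.norm_eq_abs, abs_mul, abs_mul]
      have hA0 : 0 ≤ A := (abs_nonneg _).trans (hA x)
      have h1 := WT_bound hg x
      have h2 := WT_bound hh x
      have h3 := hA x
      gcongr)
  rw [Real.norm_eq_abs] at h3
  refine h3.trans (le_of_eq ?_)
  have : volume.real (Ico (0 : ℝ) (2 ^ n)) = 2 ^ n := by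
    rw [Measure.real, Real.volume_Ico, sub_zero, ENNReal.toReal_ofReal (by positivity)]
  rw [this]; ring

/-- bound for the total multiplier, truncated version -/
lemma bil_trunc (q q' r : ℝ) (hq1 : 1 < q) (hqq : q.HolderConjugate q') (hr : 1 ≤ r)
    (hqr : |1 / q - 1 / 2| < 1 / r) :
    ∃ C : ℝ, 0 < C ∧ ∀ (M : ℕ) (_ : 1 ≤ M) (V : ℝ) (_ : 0 < V) (m : ℝ → ℝ) (U : ℕ → ℝ → ℝ)
      (_ : ∀ k, Measurable (U k)) (_ : ∀ k, PCR (U k) (4 * M * 2 ^ k))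
      (_ : ∀ k ξ, |U k ξ| ≤ 4 * V * (2 ^ (-(1 / r)) : ℝ) ^ k)
      (_ : ∀ K ξ, |m ξ - ∑ k ∈ Finset.range (K + 1), U k ξ| ≤ V * (2 ^ (-(1 / r)) : ℝ) ^ K)
      (_ : Measurable m)
      (g h : ℝ → ℝ) (_ : Integrable g μplus)
      (_ : Integrable h μplus) (_ : MemLp g (ENNReal.ofReal q) μplus)
      (_ : MemLp h (ENNReal.ofReal q') μplus) (n j : ℕ),
      |∫ ξ in Ico (0 : ℝ) (2 ^ n), m ξ * WT (trunc j g) ξ * WT (trunc j h) ξ| ≤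
        C * (M : ℝ) ^ |1 / q - 1 / 2| * V * (nq q g * nq q' h) := by
  obtain ⟨C, hC, hbil⟩ := bil_U q q' hq1 hqq
  set σ := |1 / q - 1 / 2| with hσ
  set ρ : ℝ := 2 ^ (-(1 / r)) with hρ
  have hρ0 : 0 < ρ := by positivity
  have hρ1 : ρ < 1 := by
    apply Real.rpow_lt_one_of_one_lt_of_neg (by norm_num)
    have : 0 < 1 / r := by positivity
    linarith
  set θ : ℝ := 2 ^ σ * ρ with hθ
  have hθ0 : 0 < θ := by positivity
  have hθ1 : θ < 1 := by
    rw [hθ, hρ, ← Real.rpow_add (by norm_num)]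
    apply Real.rpow_lt_one_of_one_lt_of_neg (by norm_num)
    linarith
  refine ⟨C * 4 ^ σ * 4 * (1 - θ)⁻¹, by
    have : 0 < 1 - θ := by linarith
    positivity, ?_⟩
  intro M hM V hV m U hUm hUp hUb hUe hmm g h hg hh hgq hhq n j
  set N0 := nq q g * nq q' h with hN0
  have hN0' : 0 ≤ N0 := mul_nonneg (nq_nonneg _ _) (nq_nonneg _ _)
  have hgt := trunc_int hg j
  have hht := trunc_int hh j
  set E := (∫ x, |trunc j g x| ∂μplus) * (∫ x, |trunc j h x| ∂μplus) * 2 ^ n with hE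
  have hK : ∀ K : ℕ, |∫ ξ in Ico (0 : ℝ) (2 ^ n), m ξ * WT (trunc j g) ξ * WT (trunc j h) ξ| ≤
      C * 4 ^ σ * 4 * (1 - θ)⁻¹ * (M : ℝ) ^ σ * V * N0 + V * ρ ^ K * E := by
    intro K
    set e : ℝ → ℝ := fun ξ => m ξ - ∑ k ∈ Finset.range (K + 1), U k ξ with he
    have hem : Measurable e := hmm.sub (Finset.measurable_fun_sum _ fun k _ => hUm k)
    have hsplit : ∫ ξ in Ico (0 : ℝ) (2 ^ n), m ξ * WT (trunc j g) ξ * WT (trunc j h) ξ =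
        ∑ k ∈ Finset.range (K + 1), (∫ ξ in Ico (0 : ℝ) (2 ^ n),
          U k ξ * WT (trunc j g) ξ * WT (trunc j h) ξ) +
        ∫ ξ in Ico (0 : ℝ) (2 ^ n), e ξ * WT (trunc j g) ξ * WT (trunc j h) ξ := by
      rw [← integral_finsetSum _ fun k _ => uWW_int hgt hht (hUm k) _ (hUb k) _,
        ← integral_add (integrable_finsetSum _ fun k _ => uWW_int hgt hht (hUm k) _ (hUb k) _)
          (uWW_int hgt hht hem _ (hUe K) _)]
      congr 1; ext ξ
      rw [← Finset.sum_mul, ← Finset.sum_mul, he]; ring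
    rw [hsplit]
    refine (abs_add_le _ _).trans (add_le_add ?_ ?_)
    · refine (Finset.abs_sum_le_sum_abs _ _).trans ?_
      calc _ ≤ ∑ k ∈ Finset.range (K + 1), C * 4 ^ σ * 4 * (M : ℝ) ^ σ * V * N0 * θ ^ k := by
            refine Finset.sum_le_sum fun k _ => ?_
            refine (hbil (4 * M * 2 ^ k) (Nat.one_le_iff_ne_zero.2 (by positivity)) (U k) (hUm k)
              (hUp k) _ (by positivity) (hUb k) g h hg hh hgq hhq n j).trans (le_of_eq ?_)
            push_cast
            rw [Real.mul_rpow (by positivity) (by positivity),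
              Real.mul_rpow (by positivity) (by positivity), ← Real.rpow_natCast 2 k,
              ← Real.rpow_mul (by norm_num), mul_comm (k : ℝ) σ, Real.rpow_mul (by norm_num),
              Real.rpow_natCast, hθ, mul_pow]
            ring
        _ = C * 4 ^ σ * 4 * (M : ℝ) ^ σ * V * N0 * ∑ k ∈ Finset.range (K + 1), θ ^ k := by
            rw [Finset.mul_sum]
        _ ≤ C * 4 ^ σ * 4 * (M : ℝ) ^ σ * V * N0 * (1 - θ)⁻¹ := by
            gcongr
            rw [← tsum_geometric_of_lt_one hθ0.le hθ1]
            exact (summable_geometric_of_lt_one hθ0.le hθ1).sum_le_tsum _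
              (fun k _ => by positivity)
        _ = _ := by ring
    · exact uWW_bound hgt hht _ (hUe K) n
  have hlim : Tendsto (fun K : ℕ => C * 4 ^ σ * 4 * (1 - θ)⁻¹ * (M : ℝ) ^ σ * V * N0 +
      V * ρ ^ K * E) atTop (nhds (C * 4 ^ σ * 4 * (1 - θ)⁻¹ * (M : ℝ) ^ σ * V * N0 +
      V * 0 * E)) :=
    (((tendsto_pow_atTop_nhds_zero_of_lt_one hρ0.le hρ1).const_mul V).mul_const E).const_add _
  have := ge_of_tendsto' hlim hK
  simpa using this

/-- bound for the total multiplier -/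
lemma bil_full {g h m : ℝ → ℝ} (hg : Integrable g μplus) (hh : Integrable h μplus)
    (hm : Measurable m) (A : ℝ) (hA : ∀ x, |m x| ≤ A)
    (hmg : Integrable (fun ξ => m ξ * WT g ξ) μplus) (B : ℝ)
    (hB : ∀ n j : ℕ,
      |∫ ξ in Ico (0 : ℝ) (2 ^ n), m ξ * WT (trunc j g) ξ * WT (trunc j h) ξ| ≤ B) :
    |∫ ξ, m ξ * WT g ξ * WT h ξ ∂μplus| ≤ B := by
  have hcov : ∀ x : ℝ, 0 ≤ x → ∀ᶠ j : ℕ in atTop, x ∈ Ico (0 : ℝ) (2 ^ j) := by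
    intro x hx
    obtain ⟨n, hn⟩ := exists_pow_gt x
    filter_upwards [eventually_ge_atTop n] with k hk
    exact ⟨hx, hn.trans_le (pow_le_pow_right₀ (by norm_num) hk)⟩
  have hWlim : ∀ {f : ℝ → ℝ}, Integrable f μplus → ∀ ξ,
      Tendsto (fun j => WT (trunc j f) ξ) atTop (nhds (WT f ξ)) := by
    intro f hf ξ
    refine tendsto_integral_of_dominated_convergence (fun x => |f x|)
      (fun j => (kap_mul_int (trunc_int hf j) ξ).1) hf.abs ?_ ?_
    · intro j
      refine Eventually.of_forall fun x => ?_
      rw [norm_mul, Real.norm_eq_abs, Real.norm_eq_abs]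
      have h1 : |trunc j f x| ≤ |f x| := by
        unfold trunc indicator; split_ifs <;> simp
      nlinarith [kap_abs_le ξ x, abs_nonneg (kap ξ x), abs_nonneg (trunc j f x)]
    · filter_upwards [ae_pos] with x hx
      apply tendsto_const_nhds.congr'
      filter_upwards [hcov x hx.le] with j hj
      rw [trunc, indicator_of_mem hj]
  have htr : ∀ {f : ℝ → ℝ}, Integrable f μplus → ∀ j ξ,
      |WT (trunc j f) ξ| ≤ ∫ x, |f x| ∂μplus := by
    intro f hf j ξ
    refine (WT_bound (trunc_int hf j) ξ).trans ?_
    refine integral_mono (trunc_int hf j).abs hf.abs fun x => ?_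
    simp only
    unfold trunc indicator; split_ifs <;> simp
  have h1 : ∀ n : ℕ, |∫ ξ in Ico (0 : ℝ) (2 ^ n), m ξ * WT g ξ * WT h ξ| ≤ B := by
    intro n
    have hl : Tendsto (fun j => ∫ ξ in Ico (0 : ℝ) (2 ^ n),
        m ξ * WT (trunc j g) ξ * WT (trunc j h) ξ) atTop
        (nhds (∫ ξ in Ico (0 : ℝ) (2 ^ n), m ξ * WT g ξ * WT h ξ)) := by
      refine tendsto_integral_of_dominated_convergence
        (fun _ => A * (∫ x, |g x| ∂μplus) * (∫ x, |h x| ∂μplus))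
        (fun j => (uWW_int (trunc_int hg j) (trunc_int hh j) hm A hA _).1)
        (integrable_const _) ?_ ?_
      · intro j
        refine Eventually.of_forall fun x => ?_
        rw [Real.norm_eq_abs, abs_mul, abs_mul]
        have hA0 : 0 ≤ A := (abs_nonneg _).trans (hA x)
        have h1 := htr hg j x
        have h2 := htr hh j x
        have h3 := hA x
        gcongr
      · exact Eventually.of_forall fun x =>
          ((hWlim hg x).const_mul (m x)).mul (hWlim hh x)
    exact le_of_tendsto' hl.abs (hB n)
  have hF : Integrable (fun ξ => m ξ * WT g ξ * WT h ξ) μplus := by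
    refine Integrable.mul_bdd (c := ∫ x, |h x| ∂μplus) hmg (WT_meas hh) ?_
    exact Eventually.of_forall fun x => WT_bound hh x
  have hl : Tendsto (fun n : ℕ => ∫ ξ in Ico (0 : ℝ) (2 ^ n), m ξ * WT g ξ * WT h ξ) atTop
      (nhds (∫ ξ, m ξ * WT g ξ * WT h ξ ∂μplus)) := by
    have e : ∀ n : ℕ, ∫ ξ in Ico (0 : ℝ) (2 ^ n), m ξ * WT g ξ * WT h ξ =
        ∫ ξ, (Ico (0 : ℝ) (2 ^ n)).indicator (fun ξ => m ξ * WT g ξ * WT h ξ) ξ ∂μplus := by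
      intro n
      rw [integral_indicator measurableSet_Ico, restrict_plus measurableSet_Ico (Ico_sub _)]
    simp only [e]
    refine tendsto_integral_of_dominated_convergence (fun ξ => |m ξ * WT g ξ * WT h ξ|)
      (fun n => (hF.indicator measurableSet_Ico).1) hF.abs ?_ ?_
    · intro n
      refine Eventually.of_forall fun x => ?_
      rw [Real.norm_eq_abs]
      unfold indicator
      split_ifs
      · exact le_rfl
      · rw [abs_zero]; positivity
    · filter_upwards [ae_pos] with x hx
      apply tendsto_const_nhds.congr'
      filter_upwards [hcov x hx.le] with j hj
      rw [indicator_of_mem hj]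
  exact le_of_tendsto' hl.abs h1

/-! ### Part J: duality and conclusion -/

lemma ind_memLp {f : ℝ → ℝ} (hf : AEStronglyMeasurable f μplus) (A : ℝ) (hA : ∀ x, |f x| ≤ A)
    (p : ℝ≥0∞) (a : ℝ) : MemLp ((Ico 0 a).indicator f) p μplus := by
  rw [memLp_indicator_iff_restrict measurableSet_Ico, restrict_plus measurableSet_Ico (Ico_sub _)]
  have hf' := hf.restrict (s := Ico 0 a)
  rw [restrict_plus measurableSet_Ico (Ico_sub _)] at hf'
  exact MemLp.of_bound hf' A (Eventually.of_forall fun x => hA x)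

lemma eLpNorm_nq {q : ℝ} (hq : 0 < q) {f : ℝ → ℝ} (hf : MemLp f (ENNReal.ofReal q) μplus) :
    eLpNorm f (ENNReal.ofReal q) μplus = ENNReal.ofReal (nq q f) := by
  rw [hf.eLpNorm_eq_integral_rpow_norm (by simpa using hq) ENNReal.ofReal_ne_top,
    ENNReal.toReal_ofReal hq.le, nq, one_div]
  rfl

lemma dual_bound {q q' : ℝ} (hq1 : 1 < q) (hqq : q.HolderConjugate q') {F : ℝ → ℝ}
    (hF : AEStronglyMeasurable F μplus) (A : ℝ) (hA : ∀ x, |F x| ≤ A) (B : ℝ) (hB : 0 ≤ B)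
    (H : ∀ h : ℝ → ℝ, Integrable h μplus → MemLp h (ENNReal.ofReal q') μplus →
      |∫ x, F x * h x ∂μplus| ≤ B * nq q' h) :
    eLpNorm F (ENNReal.ofReal q) μplus ≤ ENNReal.ofReal B := by
  have hq := hqq.pos
  have hq' := hqq.symm.pos
  have hA0 : 0 ≤ A := (abs_nonneg _).trans (hA 0)
  have key : ∀ n : ℕ, eLpNorm ((Ico (0 : ℝ) (2 ^ n)).indicator F) (ENNReal.ofReal q) μplus
      ≤ ENNReal.ofReal B := by
    intro n
    rw [eLpNorm_nq hq (ind_memLp hF A hA _ _)]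
    apply ENNReal.ofReal_le_ofReal
    set Fn := (Ico (0 : ℝ) (2 ^ n)).indicator F with hFn
    set φ : ℝ → ℝ := fun t => SignType.sign t * |t| ^ (q - 1) with hφ
    have hφm : Measurable φ := by
      have h1 : Measurable fun t : ℝ => ((SignType.sign t : SignType) : ℝ) := by
        have : (fun t : ℝ => ((SignType.sign t : SignType) : ℝ)) =
            fun t => if 0 < t then (1 : ℝ) else if t < 0 then -1 else 0 := by
          ext t; rw [sign_apply]; split_ifs <;> simp
        rw [this]
        exact Measurable.ite measurableSet_Ioi measurable_const
          (Measurable.ite measurableSet_Iio measurable_const measurable_const)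
      exact h1.mul ((measurable_id.abs).pow_const _)
    have hφb : ∀ t, |φ t| ≤ |t| ^ (q - 1) := by
      intro t
      simp only [hφ]
      rw [abs_mul, abs_of_nonneg (show 0 ≤ |t| ^ (q - 1) by positivity)]
      have : |((SignType.sign t : SignType) : ℝ)| ≤ 1 := by
        rcases SignType.sign t with _ | _ | _ <;> simp
      have h2 : 0 ≤ |t| ^ (q - 1) := by positivity
      nlinarith
    have hφA : ∀ t : ℝ, |t| ^ (q - 1) * |t| = |t| ^ q := by
      intro t
      rcases (abs_nonneg t).eq_or_lt with h | h
      · rw [← h, Real.zero_rpow hq.ne', mul_zero]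
      · rw [← Real.rpow_add_one h.ne']; congr 1; ring
    have hφt : ∀ t, t * φ t = |t| ^ q := by
      intro t
      simp only [hφ]
      rw [← mul_assoc, self_mul_sign, ← hφA t]; ring
    have hφq : ∀ t, |φ t| ^ q' = |t| ^ q := by
      intro t
      rcases eq_or_ne t 0 with h | h
      · subst h
        have : φ 0 = 0 := by simp [hφ]
        rw [this, abs_zero, Real.zero_rpow hq.ne', Real.zero_rpow hq'.ne']
      · have h1 : |φ t| = |t| ^ (q - 1) := by
          have h3 := hφt t
          have h4 : |t| * |φ t| = |t| * |t| ^ (q - 1) := by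
            rw [← abs_mul, h3, mul_comm, hφA, abs_of_nonneg (by positivity)]
          exact mul_left_cancel₀ (abs_ne_zero.2 h) h4
        rw [h1, ← Real.rpow_mul (abs_nonneg _)]
        congr 1
        exact hqq.sub_one_mul_conj
    set h : ℝ → ℝ := (Ico (0 : ℝ) (2 ^ n)).indicator (fun x => φ (F x)) with hh
    have hcm : AEStronglyMeasurable (fun x => φ (F x)) μplus :=
      (hφm.comp_aemeasurable hF.aemeasurable).aestronglyMeasurable
    have hcb : ∀ x, |φ (F x)| ≤ A ^ (q - 1) := fun x =>
      (hφb _).trans (Real.rpow_le_rpow (abs_nonneg _) (hA x) (by linarith))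
    have hh1 : Integrable h μplus := memLp_one_iff_integrable.1 (ind_memLp hcm _ hcb 1 _)
    have hh2 := ind_memLp hcm _ hcb (ENNReal.ofReal q') (2 ^ n)
    have hkey := H h hh1 hh2
    have e1 : ∀ x, F x * h x = |Fn x| ^ q := by
      intro x
      by_cases hx : x ∈ Ico (0 : ℝ) (2 ^ n)
      · simp only [hh, hFn, indicator_of_mem hx, hφt]
      · simp only [hh, hFn, indicator_of_notMem hx, mul_zero, abs_zero, Real.zero_rpow hq.ne']
    have e2 : ∀ x, |h x| ^ q' = |Fn x| ^ q := by
      intro x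
      by_cases hx : x ∈ Ico (0 : ℝ) (2 ^ n)
      · simp only [hh, hFn, indicator_of_mem hx, hφq]
      · simp only [hh, hFn, indicator_of_notMem hx, abs_zero, Real.zero_rpow hq.ne',
          Real.zero_rpow hq'.ne']
    rw [nq] at hkey ⊢
    simp only [e1, e2] at hkey
    set X := ∫ x, |Fn x| ^ q ∂μplus with hX
    have hX0 : 0 ≤ X := integral_nonneg fun x => by positivity
    rw [abs_of_nonneg hX0] at hkey
    rcases hX0.eq_or_lt with h0 | h0
    · rw [← h0, Real.zero_rpow (by positivity)]; exact hB
    · have h5 : X ^ (1 / q) * X ^ (1 / q') = X := by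
        rw [← Real.rpow_add h0, one_div, one_div, hqq.inv_add_inv_eq_one, Real.rpow_one]
      have h6 : 0 < X ^ (1 / q') := by positivity
      exact le_of_mul_le_mul_right (h5.le.trans hkey) h6
  have hlim := Lp.eLpNorm_lim_le_liminf_eLpNorm (p := ENNReal.ofReal q) (μ := μplus)
    (f := fun n : ℕ => (Ico (0 : ℝ) (2 ^ n)).indicator F)
    (fun n => hF.indicator measurableSet_Ico) F (by
      filter_upwards [ae_pos] with x hx
      apply tendsto_const_nhds.congr'
      obtain ⟨n, hn⟩ := exists_pow_gt x
      filter_upwards [eventually_ge_atTop n] with k hk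
      rw [indicator_of_mem]
      exact ⟨hx.le, hn.trans_le (pow_le_pow_right₀ (by norm_num) hk)⟩)
  refine hlim.trans ?_
  refine (liminf_le_liminf (Eventually.of_forall key)).trans ?_
  simp

lemma Mq_bound {q q' : ℝ} (hq1 : 1 < q) (hqq : q.HolderConjugate q') {m : ℝ → ℝ}
    (hm : Measurable m) (A : ℝ) (hA : ∀ x, |m x| ≤ A) (B : ℝ) (hB : 0 ≤ B)
    (H : ∀ g h : ℝ → ℝ, Integrable g μplus → Integrable h μplus →
      MemLp g (ENNReal.ofReal q) μplus → MemLp h (ENNReal.ofReal q') μplus → ∀ n j : ℕ,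
      |∫ ξ in Ico (0 : ℝ) (2 ^ n), m ξ * WT (trunc j g) ξ * WT (trunc j h) ξ| ≤
        B * (nq q g * nq q' h)) :
    Mq q m ≤ ENNReal.ofReal B := by
  have hq := hqq.pos
  refine iSup₂_le fun g hg1 => ?_
  have hae : (fun ξ => m ξ * walshFT g ξ) =ᵐ[μplus] fun ξ => m ξ * WT g ξ := by
    filter_upwards [walshFT_ae g] with ξ hξ
    rw [hξ]
  have hWT : WT (fun ξ => m ξ * walshFT g ξ) = WT (fun ξ => m ξ * WT g ξ) := by
    ext ξ
    rw [WT, WT]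
    apply integral_congr_ae
    filter_upwards [hae] with x hx
    rw [hx]
  rw [eLpNorm_congr_ae (walshFT_ae _), hWT]
  by_cases hP : Integrable (fun ξ => m ξ * WT g ξ) μplus
  swap
  · have : WT (fun ξ => m ξ * WT g ξ) =ᵐ[μplus] 0 := by
      filter_upwards [ae_pos] with ξ hξ using WT_not_int hP hξ.le
    rw [eLpNorm_congr_ae this]; simp
  by_cases hg : Integrable g μplus
  swap
  · have : WT (fun ξ => m ξ * WT g ξ) = 0 := by
      ext ξ
      rw [WT, Pi.zero_apply]
      apply integral_eq_zero_of_ae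
      filter_upwards [ae_pos] with x hx
      simp [WT_not_int hg hx.le]
    rw [this]; simp
  have hgL : MemLp g (ENNReal.ofReal q) μplus := ⟨hg.1, by rw [hg1]; simp⟩
  have hg1' : nq q g = 1 := by
    have := eLpNorm_nq hq hgL
    rw [hg1] at this
    exact ENNReal.ofReal_eq_one.1 this.symm
  refine dual_bound hq1 hqq (WT_meas hP) _ (WT_bound hP) B hB fun h hh hhL => ?_
  rw [WT_fubini hP hh]
  refine bil_full hg hh hm A hA hP _ fun n j => ?_
  refine (H g h hg hh hgL hhL n j).trans (le_of_eq ?_)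
  rw [hg1', one_mul]

lemma vnorm_zero {r : ℝ} {m : ℝ → ℝ} (h : vnorm r (Ici (0 : ℝ)) m = 0) {x : ℝ} (hx : 0 ≤ x) :
    m x = 0 := by
  rw [vnorm, add_eq_zero] at h
  have h1 := h.1
  simp only [ENNReal.iSup_eq_zero] at h1
  simpa using h1 x hx

lemma Mq_zero (q : ℝ) : Mq q (fun _ => 0) = 0 := by
  rw [Mq]
  simp only [ENNReal.iSup_eq_zero]
  intro g _
  have : (walshFT fun ξ => 0 * walshFT g ξ) = 0 := by
    ext ξ; simp [walshFT]
  rw [this]; simp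

/-- Lemma 3.5: for `1 < q < ∞` with `|1/q - 1/2| < 1/r` and pairwise disjoint intervals
`Υ` carrying functions `m_υ` supported on `υ` of bounded `r`-variation,
`‖Σ_υ m_υ‖_{M^q} ≤ C_{q,r,ε} |Υ|^{|1/q - 1/2| + ε} sup_υ ‖m_υ‖_{V^r}`. -/
theorem walsh_crs (q r eps : ℝ) (hq1 : 1 < q) (hr : 1 ≤ r)
    (hqr : |1 / q - 1 / 2| < 1 / r) (heps : 0 < eps) :
    ∃ C : ℝ, 0 < C ∧ ∀ Y : Set (Set ℝ), Y.Finite → Y.PairwiseDisjoint id →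
      (∀ v ∈ Y, v ⊆ Set.Ici 0 ∧ v.OrdConnected) → ∀ m : Set ℝ → ℝ → ℝ,
        (∀ v ∈ Y, (∀ x, m v x ≠ 0 → x ∈ v) ∧ vnorm r (Set.Ici 0) (m v) ≠ ⊤) →
        Mq q (fun ξ => ∑ᶠ v ∈ Y, m v ξ) ≤
          ENNReal.ofReal C * (Y.ncard : ℝ≥0∞) ^ (|1 / q - 1 / 2| + eps) *
            ⨆ v ∈ Y, vnorm r (Set.Ici 0) (m v) := by
  have hqq : q.HolderConjugate q.conjExponent := Real.HolderConjugate.conjExponent hq1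
  obtain ⟨C, hC, hbil⟩ := bil_trunc q q.conjExponent r hq1 hqq hr hqr
  refine ⟨C, hC, ?_⟩
  intro Y0 hfin hdisj hv m hm
  by_cases hA0 : (⨆ v ∈ Y0, vnorm r (Set.Ici (0 : ℝ)) (m v)) = 0
  · have h0 : (fun ξ => ∑ᶠ v ∈ Y0, m v ξ) = fun _ => 0 := by
      ext ξ
      refine finsum_mem_eq_zero_of_forall_eq_zero fun v hvY => ?_
      by_contra hne
      simp only [ENNReal.iSup_eq_zero] at hA0
      exact hne (vnorm_zero (hA0 v hvY) ((hv v hvY).1 ((hm v hvY).1 ξ hne)))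
    rw [h0, Mq_zero]; exact zero_le
  set A := ⨆ v ∈ Y0, vnorm r (Set.Ici (0 : ℝ)) (m v) with hA
  lift Y0 to Finset (Set ℝ) using hfin with Y
  simp only [Finset.mem_coe] at hv hm hA
  have hAtop : A ≠ ⊤ := by
    refine ne_top_of_le_ne_top (ENNReal.sum_ne_top.2 fun v hvY => (hm v hvY).2) ?_ (b := ∑ v ∈ Y, _)
    rw [hA]
    exact iSup₂_le fun v hvY => Finset.single_le_sum
      (f := fun v => vnorm r (Set.Ici (0 : ℝ)) (m v)) (fun _ _ => zero_le) hvY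
  set V := A.toReal with hV
  have hV0 : 0 < V := ENNReal.toReal_pos hA0 hAtop
  have hAV : ENNReal.ofReal V = A := ENNReal.ofReal_toReal hAtop
  have hYne : Y.Nonempty := by
    rw [Finset.nonempty_iff_ne_empty]
    rintro rfl
    apply hA0; rw [hA]; simp
  have hM : 1 ≤ Y.card := Finset.card_pos.2 hYne
  obtain ⟨U, hU1, hU2, hU3, hU4⟩ := total_decomp r hr Y hYne hdisj hv m
    (fun v h => (hm v h).1) V hV0 (fun v h => by
      rw [hAV, hA]
      exact le_iSup₂ (f := fun v (_ : v ∈ Y) => vnorm r (Set.Ici (0 : ℝ)) (m v)) v h)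
  have hsum : (fun ξ => ∑ᶠ v ∈ (Y : Set (Set ℝ)), m v ξ) = fun ξ => ∑ v ∈ Y, m v ξ := by
    ext ξ; exact finsum_mem_coe_finset _ _
  rw [hsum]
  set mt : ℝ → ℝ := fun ξ => ∑ v ∈ Y, m v ξ with hmt
  have hρ0 : (0 : ℝ) < 2 ^ (-(1 / r)) := by positivity
  have hρ1 : (2 : ℝ) ^ (-(1 / r)) < 1 := by
    apply Real.rpow_lt_one_of_one_lt_of_neg (by norm_num)
    have : 0 < 1 / r := by positivity
    linarith
  have hmm : Measurable mt := by
    refine measurable_of_tendsto_metrizable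
      (f := fun (K : ℕ) ξ => ∑ k ∈ Finset.range (K + 1), U k ξ)
      (fun K => Finset.measurable_fun_sum _ fun k _ => hU1 k) ?_
    rw [tendsto_pi_nhds]
    intro ξ
    rw [tendsto_iff_dist_tendsto_zero]
    refine squeeze_zero (fun _ => dist_nonneg) (fun K => ?_) (g := fun K : ℕ =>
      V * ((2 : ℝ) ^ (-(1 / r))) ^ K) ?_
    · rw [dist_comm, Real.dist_eq]; exact hU4 K ξ
    · simpa using (tendsto_pow_atTop_nhds_zero_of_lt_one hρ0.le hρ1).const_mul V
  have hmb : ∀ x, |mt x| ≤ 5 * V := by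
    intro x
    have h1 := hU4 0 x
    have h2 := hU3 0 x
    simp only [zero_add, Finset.sum_range_one, pow_zero, mul_one] at h1 h2
    have h3 : mt x = (mt x - U 0 x) + U 0 x := by ring
    rw [h3]
    refine (abs_add_le _ _).trans ?_
    linarith
  have hMq := Mq_bound hq1 hqq hmm _ hmb (C * (Y.card : ℝ) ^ |1 / q - 1 / 2| * V)
    (by positivity) (fun g h hg hh hgL hhL n j =>
      hbil Y.card hM V hV0 mt U hU1 hU2 hU3 hU4 hmm g h hg hh hgL hhL n j)
  refine hMq.trans ?_
  rw [Set.ncard_coe_finset, ENNReal.ofReal_mul (by positivity), hAV, ENNReal.ofReal_mul hC.le]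
  have hcard : ENNReal.ofReal ((Y.card : ℝ) ^ |1 / q - 1 / 2|) ≤
      (Y.card : ℝ≥0∞) ^ (|1 / q - 1 / 2| + eps) := by
    rw [← ENNReal.ofReal_rpow_of_pos (by exact_mod_cast hM), ENNReal.ofReal_natCast]
    exact ENNReal.rpow_le_rpow_of_exponent_le (by exact_mod_cast hM) (by linarith)
  gcongr

end
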